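/- arXiv:2105.08496 — 9 statements merged into one kernel-verified Lean document; each statement's English description precedes it below -/
import Mathlib

section
/- Let S be a string over an alphabet Σ and α a character of Σ. Then at most one MAW is deleted when α is appended to S; that is, |MAW(S) \ MAW(Sα)| ≤ 1, where Sα denotes S with the character α appended to its right end. -/
/-!
A deleted minimal absent word does not occur in `S` but occurs in `S ++ [a]`, so it is a suffix
of `S ++ [a]`. Two suffixes of one string are comparable, and a deleted word cannot be a proper
suffix of another one, `v`: it would occur in `v.tail`, hence in `S`.
-/

open scoped symmDiff

/-- A string `w` occurs in a string `T` iff it is a contiguous substring (infix) of `T`. -/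
def Occurs {α : Type*} (w T : List α) : Prop := w <:+: T

/-- `w` is a minimal absent word (MAW) for `T`: `w` is nonempty, `w` does not occur in `T`,
but `w` minus its first character and `w` minus its last character both occur in `T`
(equivalently, every proper substring of `w` occurs in `T`). -/
def IsMAW {α : Type*} (w T : List α) : Prop :=
  w ≠ [] ∧ ¬ Occurs w T ∧ Occurs w.tail T ∧ Occurs w.dropLast T

/-- The set of all minimal absent words for `T`. -/
def MAW {α : Type*} (T : List α) : Set (List α) := {w | IsMAW w T}

/-- Only the appended character can create a new occurrence, so a deleted word is a suffix. -/
lemma suffix_of_deleted {α : Type*} {S w : List α} {a : α}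
    (h : w ∈ MAW S \ MAW (S ++ [a])) : w <:+ S ++ [a] := by
  obtain ⟨⟨hne, habs, htail, hinit⟩, hnot⟩ := h
  have hS : S <:+: S ++ [a] := (List.prefix_append S [a]).isInfix
  have hocc : w <:+: S ++ [a] := by
    by_contra hw
    exact hnot ⟨hne, hw, htail.trans hS, hinit.trans hS⟩
  exact (List.infix_concat_iff.mp hocc).resolve_right habs

lemma eq_of_suffix_of_isMAW {α : Type*} {S w v : List α}
    (hw : IsMAW w S) (hv : IsMAW v S) (h : w <:+ v) : w = v := by
  cases v with
  | nil => exact absurd rfl hv.1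
  | cons b t =>
    rcases List.suffix_cons_iff.mp h with h | h
    · exact h
    · exact absurd (h.isInfix.trans hv.2.2.1) hw.2.1

theorem maw_append_deleted_le_one {α : Type*} (S : List α) (a : α) :
    (MAW S \ MAW (S ++ [a])).ncard ≤ 1 := by
  have hsub : (MAW S \ MAW (S ++ [a])).Subsingleton := by
    intro w hw v hv
    rcases List.suffix_or_suffix_of_suffix (suffix_of_deleted hw) (suffix_of_deleted hv) with h | h
    · exact eq_of_suffix_of_isMAW hw.1 hv.1 h
    · exact (eq_of_suffix_of_isMAW hv.1 hw.1 h).symm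
  rcases hsub.eq_empty_or_singleton with h | ⟨w, h⟩ <;> simp [h]
end

section
/- There exists a constant C > 0 such that for every string T of length n over an alphabet of size σ and every window length d with 1 ≤ d < n, the total number of changes in the set of MAWs over all shifts of a sliding window of length d over T satisfies S(T,d) = Σ_{i=1}^{n-d} |MAW(T[i..i+d-1]) △ MAW(T[i+1..i+d])| ≤ C · min{σ, d} · n. -/
/-!
Sliding the window from `U` to `V` is done in two moves through the window `W` of length `d + 1`
that contains both: append a letter on the right (`U` to `W`), then delete one on the left
(`W` to `V`). Reversing all strings turns the second move into the first, so it suffices to bound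
the total number of changes caused by appending a letter (`sum_append_le`).

Let `W = Uc`. A MAW that disappears is a suffix of `W` which does not occur in `U` but whose tail
does; its length is therefore determined, and there is at most one of them. A MAW `axb` of `W` that
is not one of `U` has at least two letters, and `ax` or `xb` does not occur in `U`.

* If `ax` does not occur in `U`, it is a suffix of `W`, while `x` occurs in `U` because it is
  followed by `b` in `W`. So `x` is the longest suffix of `W` that occurs in `U`, and only `b` is
  free.
* If `ax` occurs in `U` and `xb` does not, then `xb` is a suffix of `W` starting at some position
  `q` of `T`. Now `x` occurs in `U` to the left of `q` and `xb` does not. A position `q` has this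
  property for at most one window (`freshStarts_disjoint`): in terms of suffix trees, `q` becomes a
  leaf only once. Given `q`, only the letter `a` is free. Hence over all windows at most
  `|T|` positions occur, each with at most as many MAWs as the window has distinct letters.

A window of length `d + 1` has at most `min σ (d + 1) ≤ 2 * min σ d` distinct letters.
-/

open scoped symmDiff

section Occurrences

variable {α : Type*}

/-- Occurrences in a window `T[i..i+d)` (positions from `0`), in terms of positions of `T`. -/
lemma occurs_window (T : List α) (i d : ℕ) (w : List α) (h : i + d ≤ T.length) :
    Occurs w ((T.drop i).take d) ↔
      ∃ p, i ≤ p ∧ p + w.length ≤ i + d ∧ ∀ k < w.length, T[p + k]? = w[k]? := by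
  unfold Occurs
  rw [List.infix_iff_getElem?]
  constructor
  · rintro ⟨p, hp, hk⟩
    simp only [List.length_take, List.length_drop] at hp
    refine ⟨i + p, by omega, by omega, fun k hkw => ?_⟩
    have := hk k hkw
    rw [List.getElem?_take_of_lt (by omega), List.getElem?_drop] at this
    rw [List.getElem?_eq_getElem hkw, ← this]
    congr 1; omega
  · rintro ⟨p, hip, hp, hk⟩
    refine ⟨p - i, by simp only [List.length_take, List.length_drop]; omega, fun k hkw => ?_⟩
    rw [List.getElem?_take_of_lt (by omega), List.getElem?_drop, ← List.getElem?_eq_getElem hkw,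
      ← hk k hkw]
    congr 1; omega

lemma occurs_tail_window (T : List α) (i d : ℕ) (w : List α) (h : i + d ≤ T.length)
    (hw : w ≠ []) :
    Occurs w.tail ((T.drop i).take d) ↔
      ∃ p, i ≤ p ∧ p + w.length ≤ i + d + 1 ∧ ∀ k, k + 1 < w.length → T[p + k]? = w[k + 1]? := by
  have := List.length_pos_iff.2 hw
  rw [occurs_window T i d _ h]
  simp only [List.length_tail, List.getElem?_tail]
  refine exists_congr fun p => and_congr_right fun _ => and_congr (by omega) ?_
  exact forall_congr' fun k => ⟨fun h1 h2 => h1 (by omega), fun h1 h2 => h1 (by omega)⟩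

lemma occurs_dropLast_window (T : List α) (i d : ℕ) (w : List α) (h : i + d ≤ T.length)
    (hw : w ≠ []) :
    Occurs w.dropLast ((T.drop i).take d) ↔
      ∃ p, i ≤ p ∧ p + w.length ≤ i + d + 1 ∧ ∀ k, k + 1 < w.length → T[p + k]? = w[k]? := by
  have := List.length_pos_iff.2 hw
  rw [occurs_window T i d _ h]
  simp only [List.length_dropLast, List.getElem?_dropLast]
  refine exists_congr fun p => and_congr_right fun _ => and_congr (by omega) ?_
  refine forall_congr' fun k => ⟨fun h1 h2 => ?_, fun h1 h2 => ?_⟩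
  · rw [h1 (by omega), if_pos (by omega)]
  · rw [h1 (by omega), if_pos (by omega)]

lemma eq_of_getElem?_eq {v w : List α} (hl : v.length = w.length)
    (h : ∀ k < w.length, v[k]? = w[k]?) : v = w := by
  refine List.ext_getElem? fun k => ?_
  by_cases hk : k < w.length
  · exact h k hk
  · rw [List.getElem?_eq_none (by omega), List.getElem?_eq_none (by omega)]

lemma occurs_window_succ {T : List α} {i d : ℕ} {w : List α}
    (h : Occurs w ((T.drop i).take d)) : Occurs w ((T.drop i).take (d + 1)) :=
  List.IsInfix.trans h
    (List.take_prefix_take_left (by omega)).isInfix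

end Occurrences

section Append

variable {α : Type*}

/-- The MAWs of `T[i..i+d)` that occur in `T[i..i+d]`. -/
def lostMAW (T : List α) (i d : ℕ) : Set (List α) :=
  {w | IsMAW w ((T.drop i).take d) ∧ Occurs w ((T.drop i).take (d + 1))}

/-- The MAWs `axb` of `T[i..i+d]` for which `ax` does not occur in `T[i..i+d)`. -/
def newLeftMAW (T : List α) (i d : ℕ) : Set (List α) :=
  {w | IsMAW w ((T.drop i).take (d + 1)) ∧ ¬ Occurs w.dropLast ((T.drop i).take d)}

/-- The MAWs `axb` of `T[i..i+d]` for which `ax` occurs in `T[i..i+d)` but `xb` does not. -/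
def newRightMAW (T : List α) (i d : ℕ) : Set (List α) :=
  {w | IsMAW w ((T.drop i).take (d + 1)) ∧ Occurs w.dropLast ((T.drop i).take d) ∧
    ¬ Occurs w.tail ((T.drop i).take d)}

lemma symmDiff_append_subset (T : List α) (i d : ℕ) :
    MAW ((T.drop i).take d) ∆ MAW ((T.drop i).take (d + 1)) ⊆
      lostMAW T i d ∪ (newLeftMAW T i d ∪ newRightMAW T i d) := by
  have hmono : ∀ w, Occurs w ((T.drop i).take d) → Occurs w ((T.drop i).take (d + 1)) :=
    fun w h => occurs_window_succ h
  intro w hw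
  simp only [Set.mem_symmDiff, MAW, IsMAW, Set.mem_ofPred_eq] at hw
  simp only [lostMAW, newLeftMAW, newRightMAW, IsMAW, Set.mem_union, Set.mem_ofPred_eq]
  have h0 := hmono w
  have h1 := hmono w.tail
  have h2 := hmono w.dropLast
  tauto

/-- The positions `q` such that, with `j = i + d`, the word `T[q..j)` occurs in `T[i..j)` to the
left of `q`, while no occurrence of `T[q..j]` starts in `[i, q)`. -/
def IsFreshStart (T : List α) (i d q : ℕ) : Prop :=
  q ≤ i + d ∧
  (∃ p, i ≤ p ∧ p < q ∧ ∀ k, q + k < i + d → T[p + k]? = T[q + k]?) ∧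
  ∀ p, i ≤ p → p < q → ∃ k, q + k ≤ i + d ∧ T[p + k]? ≠ T[q + k]?

open Classical in
/-- The finite set of positions of `T` satisfying `IsFreshStart`. -/
noncomputable def freshStarts (T : List α) (d i : ℕ) : Finset ℕ :=
  (Finset.range T.length).filter (IsFreshStart T i d)

lemma freshStarts_disjoint (T : List α) (d : ℕ) {i j : ℕ} (h : i < j) :
    Disjoint (freshStarts T d i) (freshStarts T d j) := by
  rw [Finset.disjoint_left]
  intro q hi hj
  simp only [freshStarts, Finset.mem_filter] at hi hj
  obtain ⟨-, hq, -, hno⟩ := hi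
  obtain ⟨-, -, ⟨p, hjp, hpq, hp⟩, -⟩ := hj
  obtain ⟨k, hk, hne⟩ := hno p (by omega) hpq
  exact hne (hp k (by omega))

lemma sum_card_freshStarts_le (T : List α) (d m : ℕ) :
    ∑ i ∈ Finset.range m, (freshStarts T d i).card ≤ T.length := by
  classical
  rw [← Finset.card_biUnion]
  · calc _ ≤ (Finset.range T.length).card := by
          refine Finset.card_le_card ?_
          intro q hq
          simp only [Finset.mem_biUnion, freshStarts, Finset.mem_filter] at hq
          obtain ⟨_, _, h, _⟩ := hq
          exact h
      _ = _ := Finset.card_range _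
  · intro i _ j _ hij
    rcases lt_or_gt_of_ne hij with h | h
    · exact freshStarts_disjoint T d h
    · exact (freshStarts_disjoint T d h).symm

lemma finite_ncard_le_of_injOn {β γ : Type*} {s : Set β} (t : Finset γ) (f : β → γ)
    (hf : ∀ x ∈ s, f x ∈ t) (hinj : Set.InjOn f s) : s.Finite ∧ s.ncard ≤ t.card := by
  refine ⟨Set.Finite.of_injOn (t := (t : Set γ)) hf hinj t.finite_toSet, ?_⟩
  rw [← Set.ncard_coe_finset t]
  exact Set.ncard_le_ncard_of_injOn f hf hinj t.finite_toSet

/-- A lost MAW is the suffix of `T[i..i+d]` of its length, and its tail occurs in `T[i..i+d)`. -/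
lemma lostMAW_spec {T : List α} {i d : ℕ} (h : i + d < T.length) {w : List α}
    (hw : w ∈ lostMAW T i d) :
    (∃ p, i ≤ p ∧ p + w.length = i + d + 1 ∧ ∀ k < w.length, T[p + k]? = w[k]?) ∧
    (¬ ∃ p, i ≤ p ∧ p + w.length ≤ i + d ∧ ∀ k < w.length, T[p + k]? = w[k]?) ∧
    ∃ p, i ≤ p ∧ p + w.length ≤ i + d + 1 ∧ ∀ k, k + 1 < w.length → T[p + k]? = w[k + 1]? := by
  obtain ⟨⟨hne, hno, ht, -⟩, ho⟩ := hw
  rw [occurs_window T i d w (by omega)] at hno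
  rw [occurs_window T i (d + 1) w (by omega)] at ho
  rw [occurs_tail_window T i d w (by omega) hne] at ht
  refine ⟨?_, hno, ht⟩
  obtain ⟨p, hip, hp, hk⟩ := ho
  refine ⟨p, hip, ?_, hk⟩
  by_contra hcon
  exact hno ⟨p, hip, by omega, hk⟩

lemma lostMAW_length_le {T : List α} {i d : ℕ} (h : i + d < T.length) {v w : List α}
    (hv : v ∈ lostMAW T i d) (hw : w ∈ lostMAW T i d) : w.length ≤ v.length := by
  obtain ⟨⟨p, hip, hp, hpk⟩, hvno, -⟩ := lostMAW_spec h hv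
  obtain ⟨⟨q, hiq, hq, hqk⟩, -, ⟨r, hir, hr, hrk⟩⟩ := lostMAW_spec h hw
  by_contra! hlt
  -- `v` would be a suffix of the tail of `w`, which occurs at `r`
  refine hvno ⟨r + (p - q - 1), by omega, by omega, fun k hk => ?_⟩
  rw [← hpk k hk, show r + (p - q - 1) + k = r + (p - q - 1 + k) by omega,
    hrk _ (by omega), ← hqk _ (by omega)]
  congr 1; omega

lemma lostMAW_card {T : List α} {i d : ℕ} (h : i + d < T.length) :
    (lostMAW T i d).Finite ∧ (lostMAW T i d).ncard ≤ 1 := by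
  refine finite_ncard_le_of_injOn {()} (fun _ => ()) (by simp) ?_
  intro v hv w hw _
  have hl := le_antisymm (lostMAW_length_le h hw hv) (lostMAW_length_le h hv hw)
  obtain ⟨⟨p, hip, hp, hpk⟩, -⟩ := lostMAW_spec h hv
  obtain ⟨⟨q, hiq, hq, hqk⟩, -⟩ := lostMAW_spec h hw
  obtain rfl : p = q := by omega
  exact eq_of_getElem?_eq hl fun k hk => (hpk k (by omega)).symm.trans (hqk k hk)

/-- For `w = axb` in `newLeftMAW`, the word `ax` is a suffix of the long window that does not occur
in the short one, and `xb` occurs in the long one. -/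
lemma newLeftMAW_spec {T : List α} {i d : ℕ} (h : i + d < T.length) {w : List α}
    (hw : w ∈ newLeftMAW T i d) :
    2 ≤ w.length ∧
    (∃ p, i ≤ p ∧ p + w.length = i + d + 2 ∧ ∀ k, k + 1 < w.length → T[p + k]? = w[k]?) ∧
    (¬ ∃ p, i ≤ p ∧ p + w.length ≤ i + d + 1 ∧ ∀ k, k + 1 < w.length → T[p + k]? = w[k]?) ∧
    ∃ p, i ≤ p ∧ p + w.length ≤ i + d + 2 ∧ ∀ k, k + 1 < w.length → T[p + k]? = w[k + 1]? := by
  obtain ⟨⟨hne, -, ht, ho⟩, hno⟩ := hw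
  have hpos := List.length_pos_iff.2 hne
  rw [occurs_dropLast_window T i d w (by omega) hne] at hno
  rw [occurs_dropLast_window T i (d + 1) w (by omega) hne] at ho
  rw [occurs_tail_window T i (d + 1) w (by omega) hne] at ht
  refine ⟨?_, ?_, hno, ht⟩
  · by_contra hcon
    exact hno ⟨i, le_rfl, by omega, fun k hk => by omega⟩
  · obtain ⟨p, hip, hp, hk⟩ := ho
    refine ⟨p, hip, ?_, hk⟩
    by_contra hcon
    exact hno ⟨p, hip, by omega, hk⟩

lemma newLeftMAW_length_le {T : List α} {i d : ℕ} (h : i + d < T.length) {v w : List α}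
    (hv : v ∈ newLeftMAW T i d) (hw : w ∈ newLeftMAW T i d) : w.length ≤ v.length := by
  obtain ⟨hv2, ⟨p, hip, hp, hpk⟩, hvno, -⟩ := newLeftMAW_spec h hv
  obtain ⟨hw2, ⟨q, hiq, hq, hqk⟩, -, ⟨r, hir, hr, hrk⟩⟩ := newLeftMAW_spec h hw
  by_contra! hlt
  -- with `w = axb`, `v.dropLast` would be a suffix of `x`, which is followed by `b` at `r`
  refine hvno ⟨r + (p - q - 1), by omega, by omega, fun k hk => ?_⟩
  rw [← hpk k hk, show r + (p - q - 1) + k = r + (p - q - 1 + k) by omega,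
    hrk _ (by omega), ← hqk _ (by omega)]
  congr 1; omega

lemma newLeftMAW_card [DecidableEq α] {T : List α} {i d : ℕ} (h : i + d < T.length) :
    (newLeftMAW T i d).Finite ∧
      (newLeftMAW T i d).ncard ≤ ((T.drop i).take (d + 1)).toFinset.card := by
  rw [← Finset.card_image_of_injective _ (Option.some_injective α)]
  refine finite_ncard_le_of_injOn _ (fun w => w.getLast?) ?_ ?_
  · intro w hw
    obtain ⟨hw2, -⟩ := newLeftMAW_spec h hw
    have ht : w.tail <:+: (T.drop i).take (d + 1) := hw.1.2.2.1
    have hne : w.tail ≠ [] := by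
      rw [← List.length_pos_iff, List.length_tail]; omega
    simp only [Finset.mem_image, List.mem_toFinset]
    refine ⟨w.tail.getLast hne, ht.subset (List.getLast_mem hne), ?_⟩
    rw [List.getLast_tail, List.getLast?_eq_some_getLast]
  · intro v hv w hw hvw
    have hl := le_antisymm (newLeftMAW_length_le h hw hv) (newLeftMAW_length_le h hv hw)
    obtain ⟨-, ⟨p, hip, hp, hpk⟩, -⟩ := newLeftMAW_spec h hv
    obtain ⟨-, ⟨q, hiq, hq, hqk⟩, -⟩ := newLeftMAW_spec h hw
    obtain rfl : p = q := by omega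
    refine eq_of_getElem?_eq hl fun k hk => ?_
    by_cases hk' : k + 1 < w.length
    · exact (hpk k (by omega)).symm.trans (hqk k hk')
    · obtain rfl : k = w.length - 1 := by omega
      simp only [List.getLast?_eq_getElem?] at hvw
      rw [← hvw, hl]

/-- For `w = axb` in `newRightMAW`, the word `xb` is a suffix of the long window, and it starts at
a fresh position. -/
lemma newRightMAW_spec {T : List α} {i d : ℕ} (h : i + d < T.length) {w : List α}
    (hw : w ∈ newRightMAW T i d) :
    2 ≤ w.length ∧ w.length ≤ i + d + 2 ∧ i + d + 2 - w.length ∈ freshStarts T d i ∧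
    ∀ k, k + 1 < w.length → T[i + d + 2 - w.length + k]? = w[k + 1]? := by
  obtain ⟨⟨hne, hnow, ht, -⟩, ho, hno⟩ := hw
  have hpos := List.length_pos_iff.2 hne
  rw [occurs_window T i (d + 1) w (by omega)] at hnow
  rw [occurs_tail_window T i d w (by omega) hne] at hno
  rw [occurs_dropLast_window T i d w (by omega) hne] at ho
  rw [occurs_tail_window T i (d + 1) w (by omega) hne] at ht
  have h2 : 2 ≤ w.length := by
    by_contra hcon
    exact hno ⟨i, le_rfl, by omega, fun k hk => by omega⟩
  obtain ⟨q, hiq, hq, hqk⟩ := ht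
  have hq' : q + w.length = i + d + 2 := by
    by_contra hcon
    exact hno ⟨q, hiq, by omega, hqk⟩
  obtain rfl : q = i + d + 2 - w.length := by omega
  refine ⟨h2, by omega, ?_, hqk⟩
  set q := i + d + 2 - w.length
  obtain ⟨p, hip, hp, hpk⟩ := ho
  -- `ax` is not a suffix of the short window, as otherwise `axb` occurs in the long one
  have hpq : p + 1 < q := by
    by_contra hcon
    refine hnow ⟨p, hip, by omega, fun k hk => ?_⟩
    rcases k with _ | k
    · exact hpk 0 (by omega)
    · rw [← hqk k hk]; congr 1; omega
  classical
  simp only [freshStarts, Finset.mem_filter, Finset.mem_range]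
  refine ⟨by omega, by omega, ⟨p + 1, by omega, hpq, fun k hk => ?_⟩, fun r hir hrq => ?_⟩
  · rw [hqk k (by omega), ← hpk (k + 1) (by omega)]; congr 1; omega
  · by_contra! hall
    refine hno ⟨r, hir, by omega, fun k hk => ?_⟩
    rw [hall k (by omega), hqk k hk]

lemma newRightMAW_card [DecidableEq α] {T : List α} {i d : ℕ} (h : i + d < T.length) :
    (newRightMAW T i d).Finite ∧ (newRightMAW T i d).ncard ≤
      (freshStarts T d i).card * ((T.drop i).take (d + 1)).toFinset.card := by
  rw [← Finset.card_image_of_injective ((T.drop i).take (d + 1)).toFinset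
    (Option.some_injective α), ← Finset.card_product]
  refine finite_ncard_le_of_injOn _ (fun w => (i + d + 2 - w.length, w[0]?)) ?_ ?_
  · intro w hw
    obtain ⟨hw2, -, hf, -⟩ := newRightMAW_spec h hw
    have ht : w.dropLast <:+: (T.drop i).take (d + 1) := hw.1.2.2.2
    have hlen : 0 < w.dropLast.length := by
      rw [List.length_dropLast]; omega
    simp only [Finset.mem_product, Finset.mem_image, List.mem_toFinset]
    refine ⟨hf, w.dropLast[0], ht.subset (List.getElem_mem hlen), ?_⟩
    rw [List.getElem_dropLast, List.getElem?_eq_getElem]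
  · intro v hv w hw hvw
    obtain ⟨-, hvl, -, hvk⟩ := newRightMAW_spec h hv
    obtain ⟨-, hwl, -, hwk⟩ := newRightMAW_spec h hw
    simp only [Prod.mk.injEq] at hvw
    obtain ⟨hl, h0⟩ := hvw
    have hl' : v.length = w.length := by omega
    refine eq_of_getElem?_eq hl' fun k hk => ?_
    rcases k with _ | k
    · exact h0
    · rw [← hvk k (by omega), ← hwk k hk, hl]

lemma append_card [DecidableEq α] {T : List α} {i d : ℕ} (h : i + d < T.length) :
    (MAW ((T.drop i).take d) ∆ MAW ((T.drop i).take (d + 1))).Finite ∧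
    (MAW ((T.drop i).take d) ∆ MAW ((T.drop i).take (d + 1))).ncard ≤
      1 + (1 + (freshStarts T d i).card) * ((T.drop i).take (d + 1)).toFinset.card := by
  have hA := lostMAW_card h
  have hB := newLeftMAW_card h
  have hC := newRightMAW_card h
  have hfin := hA.1.union (hB.1.union hC.1)
  refine ⟨hfin.subset (symmDiff_append_subset T i d), ?_⟩
  refine (Set.ncard_le_ncard (symmDiff_append_subset T i d) hfin).trans ?_
  have h1 := Set.ncard_union_le (lostMAW T i d) (newLeftMAW T i d ∪ newRightMAW T i d)
  have h2 := Set.ncard_union_le (newLeftMAW T i d) (newRightMAW T i d)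
  linarith [hA.2, hB.2, hC.2]

end Append

lemma sum_append_le {σ : ℕ} (T : List (Fin σ)) (d : ℕ) (hd : 1 ≤ d) (hdn : d < T.length) :
    ∑ i ∈ Finset.range (T.length - d),
      (MAW ((T.drop i).take d) ∆ MAW ((T.drop i).take (d + 1))).ncard
      ≤ 5 * min σ d * T.length := by
  have hσ : 1 ≤ σ := (T[0]).pos
  have hletters : ∀ i, ((T.drop i).take (d + 1)).toFinset.card ≤ 2 * min σ d := by
    intro i
    have h1 := Finset.card_le_univ ((T.drop i).take (d + 1)).toFinset
    rw [Fintype.card_fin] at h1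
    have h2 := List.toFinset_card_le ((T.drop i).take (d + 1))
    have h3 := List.length_take_le (d + 1) (T.drop i)
    omega
  have hm : 1 ≤ min σ d := le_min hσ hd
  calc _ ≤ ∑ i ∈ Finset.range (T.length - d),
        (1 + (1 + (freshStarts T d i).card) * (2 * min σ d)) := by
        refine Finset.sum_le_sum fun i hi => ?_
        have hi' := Finset.mem_range.1 hi
        refine (append_card (by omega)).2.trans ?_
        gcongr
        exact hletters i
    _ = (T.length - d) + ((T.length - d) +
          ∑ i ∈ Finset.range (T.length - d), (freshStarts T d i).card) * (2 * min σ d) := by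
        simp [Finset.sum_add_distrib, ← Finset.sum_mul]
    _ ≤ T.length + (T.length + T.length) * (2 * min σ d) := by
        gcongr
        · omega
        · omega
        · exact sum_card_freshStarts_le T d _
    _ ≤ _ := by nlinarith

section Reversal

variable {α : Type*}

lemma isMAW_reverse (w T : List α) : IsMAW w.reverse T.reverse ↔ IsMAW w T := by
  unfold IsMAW Occurs
  rw [List.tail_reverse, List.dropLast_reverse]
  simp only [List.reverse_infix, ne_eq, List.reverse_eq_nil_iff]
  tauto

lemma symmDiff_reverse (S T : List α) :
    MAW S.reverse ∆ MAW T.reverse = List.reverse '' (MAW S ∆ MAW T) := by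
  have h : ∀ X : List α, MAW X.reverse = List.reverse '' MAW X := by
    intro X
    ext w
    simp only [MAW, Set.mem_ofPred_eq, Set.mem_image]
    constructor
    · intro hw
      exact ⟨w.reverse, (isMAW_reverse _ _).1 (by simpa using hw), by simp⟩
    · rintro ⟨v, hv, rfl⟩
      exact (isMAW_reverse _ _).2 hv
  rw [h, h, Set.image_symmDiff List.reverse_injective]

lemma reverse_window (T : List α) (i m : ℕ) (h : i + m ≤ T.length) :
    (T.reverse.drop (T.length - m - i)).take m = ((T.drop i).take m).reverse := by
  rw [List.drop_reverse, List.take_reverse, List.drop_take, List.length_take]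
  congr 2
  · omega
  · congr 1; omega

/-- Deleting the first letter of a window is, after reversal, appending a letter. -/
lemma symmDiff_delete {T : List α} {i d : ℕ} (h : i + d < T.length) :
    MAW ((T.reverse.drop (T.length - d - 1 - i)).take d) ∆
      MAW ((T.reverse.drop (T.length - d - 1 - i)).take (d + 1)) =
    List.reverse '' (MAW ((T.drop (i + 1)).take d) ∆ MAW ((T.drop i).take (d + 1))) := by
  rw [← symmDiff_reverse, ← reverse_window T (i + 1) d (by omega),
    ← reverse_window T i (d + 1) (by omega),
    show T.length - d - (i + 1) = T.length - d - 1 - i by omega,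
    show T.length - (d + 1) - i = T.length - d - 1 - i by omega]

end Reversal

theorem maw_sliding_window_total_changes_upper :
    ∃ C : ℕ, 0 < C ∧ ∀ (σ : ℕ) (T : List (Fin σ)) (d : ℕ),
      1 ≤ d → d < T.length →
      ∑ i ∈ Finset.Icc 1 (T.length - d),
          (MAW ((T.drop (i - 1)).take d) ∆ MAW ((T.drop i).take d)).ncard
        ≤ C * min σ d * T.length := by
  refine ⟨10, by norm_num, fun σ T d hd hdn => ?_⟩
  have hshift : ∑ i ∈ Finset.Icc 1 (T.length - d),
      (MAW ((T.drop (i - 1)).take d) ∆ MAW ((T.drop i).take d)).ncard =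
      ∑ i ∈ Finset.range (T.length - d),
        (MAW ((T.drop i).take d) ∆ MAW ((T.drop (i + 1)).take d)).ncard := by
    rw [Finset.range_eq_Ico]
    exact (Finset.sum_Ico_add' (fun i =>
      (MAW ((T.drop (i - 1)).take d) ∆ MAW ((T.drop i).take d)).ncard) 0 (T.length - d) 1).symm
  rw [hshift]
  have happ := sum_append_le T d hd hdn
  have hdel := sum_append_le T.reverse d hd (by simpa using hdn)
  rw [List.length_reverse, ← Finset.sum_range_reflect] at hdel
  calc _ ≤ ∑ i ∈ Finset.range (T.length - d),
        ((MAW ((T.drop i).take d) ∆ MAW ((T.drop i).take (d + 1))).ncard +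
         (MAW ((T.reverse.drop (T.length - d - 1 - i)).take d) ∆
          MAW ((T.reverse.drop (T.length - d - 1 - i)).take (d + 1))).ncard) := by
        refine Finset.sum_le_sum fun i hi => ?_
        have hi' := Finset.mem_range.1 hi
        have hfin1 := (append_card (T := T) (i := i) (d := d) (by omega)).1
        have hfin2 := (append_card (T := T.reverse) (i := T.length - d - 1 - i) (d := d)
          (by rw [List.length_reverse]; omega)).1
        rw [symmDiff_delete (by omega)] at hfin2 ⊢
        rw [Set.ncard_image_of_injective _ List.reverse_injective]
        have hfin2' := hfin2.of_finite_image List.reverse_injective.injOn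
        rw [symmDiff_comm (MAW ((T.drop (i + 1)).take d))] at hfin2' ⊢
        exact (Set.ncard_le_ncard (symmDiff_triangle _ _ _) (hfin1.union hfin2')).trans
          (Set.ncard_union_le _ _)
    _ ≤ _ := by
        rw [Finset.sum_add_distrib]
        linarith
end

section
/- For every integer d ≥ 3, let S = 0·1^{d-1} (the character 0 followed by d−1 copies of the character 1). Then MAW(S0) \ MAW(S) contains the set {0 1^k 0 : 1 ≤ k ≤ d−2} ∪ {101} and MAW(S) \ MAW(S0) = {10}; consequently |MAW(S) △ MAW(S0)| ≥ d. -/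
/-!
Write `S = 0 1^m` with `m = d - 1 ≥ 2`. Appending `0` creates exactly the new factors that are
suffixes of `S0`. A word of `MAW(S) \ MAW(S0)` has both its maximal proper factors in `S`, hence
in `S0`, so it must itself occur in `S0` but not in `S`, that is, be a suffix `u0` of `S0`. Its tail
still occurs in `S`, where `0` only occurs at the front (`eq_nil_of_concat_false_occurs`), so the
tail is `0` and the word is `10`.

Conversely `10`, and with it every `1^k 0` with `1 ≤ k ≤ m`, becomes available in `S0`, while
`0 1^k 0` for `1 ≤ k < m` and `101` remain absent; these are `d - 1` new minimal absent words.
Together with `10` they give `d` elements of the symmetric difference, which is finite because a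
minimal absent word of `T` has length at most `|T| + 1`.
-/

open scoped symmDiff

/-- In `0 1^m` the character `0` occurs only in front, so a factor ending in `0` is `0` itself. -/
lemma eq_nil_of_concat_false_occurs {m : ℕ} {X : List Bool}
    (h : Occurs (X ++ [false]) (false :: List.replicate m true)) : X = [] := by
  rcases List.infix_cons_iff.1 h with h | h
  · cases X with
    | nil => rfl
    | cons a X =>
      have h2 := (List.cons_prefix_cons.1 h).2
      have : false ∈ List.replicate m true := h2.subset (by simp)
      simp at this
  · have : false ∈ List.replicate m true := h.subset (by simp)
    simp at this

lemma not_occurs_zero_ones_zero {m k : ℕ} (hk : k < m) :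
    ¬ Occurs (false :: (List.replicate k true ++ [false]))
      ((false :: List.replicate m true) ++ [false]) := by
  intro h
  rw [Occurs, List.cons_append] at h
  rcases List.infix_cons_iff.1 h with h | h
  · have h2 := (List.cons_prefix_cons.1 h).2
    -- compare the characters at position `k`
    have h3 := h2.getElem (i := k) (by simp)
    rw [List.getElem_append_right (by simp), List.getElem_append_left (by simpa using hk)] at h3
    simp at h3
  · have := h.sublist.count_le false
    simp [List.count_replicate] at this

lemma not_occurs_one_zero_one (m : ℕ) :
    ¬ Occurs [true, false, true] ((false :: List.replicate m true) ++ [false]) := by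
  intro h
  rw [Occurs, List.cons_append] at h
  rcases List.infix_cons_iff.1 h with h | h
  · simpa using (List.cons_prefix_cons.1 h).1
  · rcases List.infix_concat_iff.1 h with h | h
    · have := h.getLast (by simp)
      simp at this
    · have : false ∈ List.replicate m true := h.subset (by simp)
      simp at this

lemma occurs_ones_zero {m k : ℕ} (hk : k ≤ m) :
    Occurs (List.replicate k true ++ [false]) ((false :: List.replicate m true) ++ [false]) := by
  refine ⟨false :: List.replicate (m - k) true, [], ?_⟩
  simp only [List.cons_append, List.append_nil, ← List.append_assoc,
    List.replicate_append_replicate, Nat.sub_add_cancel hk]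

lemma occurs_zero_ones {m k : ℕ} (hk : k ≤ m) :
    Occurs (false :: List.replicate k true) (false :: List.replicate m true) := by
  refine ⟨[], List.replicate (m - k) true, ?_⟩
  simp [List.replicate_append_replicate, Nat.add_sub_cancel' hk]

lemma Occurs.append_right {α : Type*} {w T : List α} (h : Occurs w T) (U : List α) :
    Occurs w (T ++ U) :=
  h.trans (List.prefix_append T U).isInfix

lemma finite_MAW {α : Type*} [Finite α] (T : List α) : (MAW T).Finite := by
  refine (List.finite_length_le α (T.length + 1)).subset ?_
  rintro w ⟨-, -, h, -⟩
  have := h.length_le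
  simp only [List.length_tail] at this
  change w.length ≤ T.length + 1
  omega

lemma zero_ones_zero_mem_diff {m k : ℕ} (hk : 1 ≤ k) (hkm : k < m) :
    false :: (List.replicate k true ++ [false]) ∈
      MAW ((false :: List.replicate m true) ++ [false]) \
        MAW (false :: List.replicate m true) := by
  refine ⟨⟨by simp, not_occurs_zero_ones_zero hkm, occurs_ones_zero hkm.le, ?_⟩, ?_⟩
  · rw [← List.cons_append, List.dropLast_concat]
    exact (occurs_zero_ones hkm.le).append_right _
  · rintro ⟨-, -, h, -⟩
    have := congrArg List.length (eq_nil_of_concat_false_occurs h)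
    simp at this
    omega

lemma one_zero_one_mem_diff {m : ℕ} (hm : 1 ≤ m) :
    [true, false, true] ∈
      MAW ((false :: List.replicate m true) ++ [false]) \
        MAW (false :: List.replicate m true) := by
  refine ⟨⟨by simp, not_occurs_one_zero_one m, ?_, occurs_ones_zero hm⟩, ?_⟩
  · exact (occurs_zero_ones hm).append_right _
  · rintro ⟨-, -, -, h⟩
    simpa using eq_nil_of_concat_false_occurs (X := [true]) h

lemma one_zero_mem_diff {m : ℕ} (hm : 1 ≤ m) :
    [true, false] ∈ MAW (false :: List.replicate m true) \
        MAW ((false :: List.replicate m true) ++ [false]) := by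
  refine ⟨⟨by simp, ?_, (occurs_zero_ones (Nat.zero_le m)), ?_⟩, ?_⟩
  · intro h
    simpa using eq_nil_of_concat_false_occurs (X := [true]) h
  · exact List.IsInfix.trans (List.suffix_cons false [true]).isInfix (occurs_zero_ones hm)
  · rintro ⟨-, h, -⟩
    exact h (occurs_ones_zero hm)

lemma eq_one_zero_of_mem_diff {m : ℕ} (hm : 1 ≤ m) {w : List Bool}
    (hw : w ∈ MAW (false :: List.replicate m true) \
        MAW ((false :: List.replicate m true) ++ [false])) : w = [true, false] := by
  obtain ⟨⟨hne, hno, ht, hd⟩, hw⟩ := hw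
  have hocc : Occurs w ((false :: List.replicate m true) ++ [false]) := by
    by_contra h
    exact hw ⟨hne, h, ht.append_right _, hd.append_right _⟩
  rcases List.infix_concat_iff.1 hocc with hs | hi
  · rcases List.suffix_concat_iff.1 hs with rfl | ⟨u, rfl, hu⟩
    · exact absurd rfl hne
    · cases u with
      | nil => exact absurd (occurs_zero_ones (Nat.zero_le m)) hno
      | cons a u =>
        obtain rfl : u = [] := eq_nil_of_concat_false_occurs ht
        have := hu.getLast (by simp)
        obtain ⟨n, rfl⟩ := Nat.exists_eq_add_of_le' hm
        simp at this
        simp [this]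
  · exact absurd hi hno

theorem binary_maw_zero_ones_append_zero (d : ℕ) (hd : 3 ≤ d) :
    ({w | ∃ k : ℕ, 1 ≤ k ∧ k ≤ d - 2 ∧
          w = false :: (List.replicate k true ++ [false])} ∪
        {[true, false, true]} : Set (List Bool)) ⊆
      MAW ((false :: List.replicate (d - 1) true) ++ [false]) \
        MAW (false :: List.replicate (d - 1) true) ∧
    MAW (false :: List.replicate (d - 1) true) \
        MAW ((false :: List.replicate (d - 1) true) ++ [false]) = {[true, false]} ∧
    d ≤ (MAW (false :: List.replicate (d - 1) true) ∆
          MAW ((false :: List.replicate (d - 1) true) ++ [false])).ncard := by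
  obtain ⟨n, rfl⟩ := Nat.exists_eq_add_of_le' hd
  have h1 : n + 3 - 1 = n + 2 := rfl
  have h2 : n + 3 - 2 = n + 1 := rfl
  rw [h1, h2]
  refine ⟨?_, ?_, ?_⟩
  · rintro w (⟨k, hk, hkn, rfl⟩ | rfl)
    · exact zero_ones_zero_mem_diff hk (by omega)
    · exact one_zero_one_mem_diff (by omega)
  · ext w
    constructor
    · exact fun hw => eq_one_zero_of_mem_diff (by omega) hw
    · rintro rfl
      exact one_zero_mem_diff (by omega)
  · let f : ℕ → List Bool := fun k => false :: (List.replicate k true ++ [false])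
    have hf : Function.Injective f := fun a b hab => by
      simpa [f] using congrArg List.length hab
    let A : Finset (List Bool) :=
      insert [true, false] (insert [true, false, true] ((Finset.Icc 1 (n + 1)).image f))
    have hA : A.card = n + 3 := by
      rw [Finset.card_insert_of_notMem (by simp [f]),
        Finset.card_insert_of_notMem (by simp [f]), Finset.card_image_of_injective _ hf]
      simp
    rw [← hA, ← Set.ncard_coe_finset]
    refine Set.ncard_le_ncard ?_
      (((finite_MAW _).union (finite_MAW _)).subset Set.symmDiff_subset_union)
    intro w hw
    simp only [A, Finset.coe_insert, Finset.coe_image, Set.mem_insert_iff, Set.mem_image,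
      Finset.coe_Icc, Set.mem_Icc] at hw
    rcases hw with rfl | rfl | ⟨k, ⟨hk, hkn⟩, rfl⟩
    · exact Or.inl (one_zero_mem_diff (by omega))
    · exact Or.inr (one_zero_one_mem_diff (by omega))
    · exact Or.inr (zero_ones_zero_mem_diff hk (by omega))
end

section
/- For any string S over the binary alphabet Σ₂ = {0, 1} with |S| = d ≥ 3, the number of Type-3 MAWs for S0 is at most d − 2; that is, |M₃| ≤ d − 2, where M₃ is the set of MAWs w ∈ MAW(S0) \ MAW(S) such that w with its first character removed does not occur in S but w with its last character removed occurs in S. -/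
/-!
A Type-3 word is `w = c :: t`, where `t` occurs in `S0` but not in `S`; hence `t` is a suffix of
`S0`, say `t = v ++ [0]` with `v` a suffix of `S`. Since `c :: v` occurs in `S`, the suffix `v` is
proper, so `S = q ++ b :: v`, and `c ≠ b` because `w` does not occur in `S0`. Over the binary
alphabet this forces `c = !b`, so `w` is determined by the position `|q|`. Two of the `d` positions
are impossible. If `q = []`, then `(!b) :: v` occurs in `S = b :: v`, which has the same length. If
`v = []`, then both `b` and `!b` occur in `S`, so `t = [0]` does too. Thus `1 ≤ |q| ≤ d - 2`.
-/

open scoped symmDiff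

/-- Type-1 added MAWs when `0` (= `false`) is appended to the binary window `S`:
`w ∈ MAW(S0) \ MAW(S)` such that neither `w[2..]` nor `w[..|w|-1]` occurs in `S`. -/
def M1 (S : List Bool) : Set (List Bool) :=
  {w | w ∈ MAW (S ++ [false]) ∧ w ∉ MAW S ∧ ¬ Occurs w.tail S ∧ ¬ Occurs w.dropLast S}

/-- Type-2 added MAWs when `0` (= `false`) is appended to the binary window `S`:
`w ∈ MAW(S0) \ MAW(S)` such that `w[2..]` occurs in `S` but `w[..|w|-1]` does not. -/
def M2 (S : List Bool) : Set (List Bool) :=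
  {w | w ∈ MAW (S ++ [false]) ∧ w ∉ MAW S ∧ Occurs w.tail S ∧ ¬ Occurs w.dropLast S}

/-- Type-3 added MAWs when `0` (= `false`) is appended to the binary window `S`:
`w ∈ MAW(S0) \ MAW(S)` such that `w[2..]` does not occur in `S` but `w[..|w|-1]` does. -/
def M3 (S : List Bool) : Set (List Bool) :=
  {w | w ∈ MAW (S ++ [false]) ∧ w ∉ MAW S ∧ ¬ Occurs w.tail S ∧ Occurs w.dropLast S}

/-- The shape of a Type-3 word: it is obtained from the suffix `b :: v` of `S`, which is neither
all of `S` nor a single character, by flipping `b` and appending `0`. -/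
theorem exists_of_mem_M3 {S w : List Bool} (hw : w ∈ M3 S) :
    ∃ (q : List Bool) (b : Bool) (v : List Bool),
      w = (!b) :: (v ++ [false]) ∧ S = q ++ b :: v ∧ v ≠ [] ∧ q ≠ [] := by
  obtain ⟨⟨hne, habs, htail, -⟩, -, htS, hdS⟩ := hw
  simp only [Occurs] at *
  obtain _ | ⟨c, t⟩ := w
  · exact absurd rfl hne
  simp only [List.tail_cons] at htail htS
  have hsuf : t <:+ S ++ [false] := (List.infix_concat_iff.1 htail).resolve_right htS
  obtain rfl | ⟨v, rfl, q, rfl⟩ := List.suffix_concat_iff.1 hsuf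
  · exact absurd List.nil_infix htS
  have hcv : c :: v <:+: q ++ v := by
    rwa [← List.cons_append, List.dropLast_concat] at hdS
  rcases List.eq_nil_or_concat' q with rfl | ⟨q, b, rfl⟩
  · simpa using hcv.length_le
  have hcb : c = !b := by
    rw [Bool.eq_not]
    rintro rfl
    exact habs ⟨q, [], by simp⟩
  subst hcb
  refine ⟨q, b, v, rfl, by simp, ?_, ?_⟩
  · rintro rfl
    apply htS
    have h1 : (!b) ∈ q ++ [b] ++ [] := hcv.subset List.mem_cons_self
    have h2 : b ∈ q ++ [b] ++ [] := by simp
    have h3 : false ∈ q ++ [b] ++ [] := by cases b <;> assumption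
    simpa [List.singleton_infix_iff] using h3
  · rintro rfl
    simpa using hcv.eq_of_length (by simp)

theorem binary_maw_type3_le (S : List Bool) (d : ℕ) (hlen : S.length = d) (hd : 3 ≤ d) :
    (M3 S).ncard ≤ d - 2 := by
  let f : ℕ → List Bool := fun i => (!(S.getD i false)) :: (S.drop (i + 1) ++ [false])
  have hsub : M3 S ⊆ ((Finset.Icc 1 (d - 2)).image f : Finset (List Bool)) := by
    intro w hw
    obtain ⟨q, b, v, rfl, hS, hv, hq⟩ := exists_of_mem_M3 hw
    have hv' := List.length_pos_iff.2 hv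
    have hq' := List.length_pos_iff.2 hq
    have hl : d = q.length + (v.length + 1) := by rw [← hlen, hS]; simp
    rw [Finset.mem_coe, Finset.mem_image]
    refine ⟨q.length, Finset.mem_Icc.2 ⟨hq', by omega⟩, ?_⟩
    simp [f, hS, List.drop_append]
  calc (M3 S).ncard ≤ _ := Set.ncard_le_ncard hsub (Finset.finite_toSet _)
    _ = _ := Set.ncard_coe_finset _
    _ ≤ _ := Finset.card_image_le
    _ = d - 2 := by simp
end

section
/- For any string S over the binary alphabet Σ₂ = {0, 1} in which the character 0 occurs, the total number of Type-1 and Type-2 MAWs for S0 is at most 2; that is, |M₁| + |M₂| ≤ 2. -/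
/-!
Every `w ∈ M1 S ∪ M2 S` has the same word `w.dropLast`. Indeed `u := w.dropLast` occurs in `S0` but
not in `S`, so `u` is a suffix of `S0`; and since `w.tail` occurs in `S0`, dropping its last
character shows that `u.tail` occurs in `S`. Hence `u` is the shortest suffix of `S0` that does not
occur in `S`, and `w = uc` for one of the two letters `c`. As `M1 S` and `M2 S` are disjoint, their
cardinalities add up to at most `2`.
-/

open scoped symmDiff

/-- A word that occurs in `Sx` occurs in `S` after its last character is dropped. -/
lemma occurs_of_concat {S p : List Bool} {c x : Bool} (h : Occurs (p ++ [c]) (S ++ [x])) :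
    Occurs p S := by
  rcases List.infix_concat_iff.1 h with h | h
  · obtain ⟨t, ht⟩ := h
    rw [← List.append_assoc] at ht
    exact ⟨t, [], by simpa using (List.append_inj' ht rfl).1⟩
  · exact (List.prefix_append p [c]).isInfix.trans h

/-- The shape of a word in `M1 S ∪ M2 S`: its longest proper prefix is a minimal suffix of `S0`
not occurring in `S`. -/
lemma maw_shape {S w : List Bool} (hw : w ∈ MAW (S ++ [false])) (hd : ¬ Occurs w.dropLast S) :
    ∃ (a : Bool) (v : List Bool) (c : Bool), w = a :: v ++ [c] ∧ (a :: v) <:+ S ++ [false] ∧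
      Occurs v S ∧ ¬ Occurs (a :: v) S := by
  obtain ⟨hne, -, ht, hp⟩ := hw
  rcases List.eq_nil_or_concat' w with rfl | ⟨u, c, rfl⟩
  · exact absurd rfl hne
  rcases u with _ | ⟨a, v⟩
  · exact absurd ⟨[], S, by simp⟩ hd
  · rw [List.dropLast_concat] at hd hp
    exact ⟨a, v, c, rfl, (List.infix_concat_iff.1 hp).resolve_right hd,
      occurs_of_concat (by simpa using ht), hd⟩

/-- If `a :: v` is minimal under suffixes for not occurring in `S` (as `v` occurs in `S`), its only
suffix not occurring in `S` is itself. -/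
lemma eq_of_suffix {S u v : List Bool} {a : Bool} (h : u <:+ a :: v) (hv : Occurs v S)
    (hu : ¬ Occurs u S) : u = a :: v := by
  rcases List.suffix_cons_iff.1 h with h | h
  · exact h
  · exact absurd (h.isInfix.trans hv) hu

theorem binary_maw_type1_type2_le_two (S : List Bool) (hS : false ∈ S) :
    (M1 S).ncard + (M2 S).ncard ≤ 2 := by
  have hdisj : Disjoint (M1 S) (M2 S) :=
    Set.disjoint_left.2 fun w h1 h2 => h1.2.2.1 h2.2.2.1
  have hmem : ∀ w ∈ M1 S ∪ M2 S, w ∈ MAW (S ++ [false]) ∧ ¬ Occurs w.dropLast S := by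
    rintro w (h | h)
    · exact ⟨h.1, h.2.2.2⟩
    · exact ⟨h.1, h.2.2.2⟩
  obtain ⟨u, hu⟩ : ∃ u : List Bool, M1 S ∪ M2 S ⊆ {u ++ [false], u ++ [true]} := by
    rcases (M1 S ∪ M2 S).eq_empty_or_nonempty with h | ⟨w, hw⟩
    · exact ⟨[], by simp [h]⟩
    obtain ⟨a, v, -, -, hs, hv, hn⟩ := maw_shape (hmem w hw).1 (hmem w hw).2
    refine ⟨a :: v, fun w' hw' => ?_⟩
    obtain ⟨a', v', c', rfl, hs', hv', hn'⟩ := maw_shape (hmem w' hw').1 (hmem w' hw').2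
    have key : a' :: v' = a :: v := by
      rcases List.suffix_or_suffix_of_suffix hs' hs with h | h
      · exact eq_of_suffix h hv hn'
      · exact (eq_of_suffix h hv' hn).symm
    rw [key]
    cases c' <;> simp
  have hfin : (M1 S ∪ M2 S).Finite := (Set.toFinite _).subset hu
  rw [← Set.ncard_union_eq hdisj (hfin.subset Set.subset_union_left)
    (hfin.subset Set.subset_union_right)]
  exact (Set.ncard_le_ncard hu (Set.toFinite _)).trans ((Set.ncard_insert_le _ _).trans (by simp))
end

section
/- For any string S over the binary alphabet Σ₂ = {0, 1} with |S| = d ≥ 3, the number of Type-3 MAWs for S0 is at most the number of occurrences of the character 1 in S[3..d] (the suffix of S starting at position 3); that is, |M₃| ≤ |{t : 3 ≤ t ≤ d and S[t] = 1}|. -/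
/-!
Since `w[2..]` occurs in `S0` but not in `S`, a Type-3 MAW has the form `w = a u 0` with `u` a
suffix of `S`. Because `w` is absent from `S0`, the word `a u` is not a suffix of `S`; yet it occurs
in `S`, and the character after that occurrence cannot be `0` because `u 0` does not occur in `S`.
So the occurrence is followed by a `1`, and this `1` lies at position at least 3 since `u` is nonempty
(`M3_structure`). Sending `w` to the position of that `1` is injective: if `a u` and `a' u'` both end
right before the same position, then they are equal or one of them, say `a u`, is a proper suffix of
the other, hence a suffix of `u'` and thus of `S`, which is impossible.
-/

open scoped symmDiff

/-- The number of indices at which a list carries the value `true` is its count of `true`. -/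
lemma card_filter_getElem?_eq_count (L : List Bool) :
    ((Finset.range L.length).filter (fun i => L[i]? = some true)).card = L.count true := by
  induction L using List.reverseRecOn with
  | nil => simp
  | append_singleton L b ih =>
    have h : (Finset.range L.length).filter (fun i => (L ++ [b])[i]? = some true)
        = (Finset.range L.length).filter (fun i => L[i]? = some true) := by
      apply Finset.filter_congr
      intro i hi
      rw [List.getElem?_append_left (Finset.mem_range.mp hi)]
    rw [List.length_append, List.length_singleton, Finset.range_add_one, Finset.filter_insert, h,
      List.count_append]
    cases b <;> simp [ih]

/-- A Type-3 MAW is `a u 0` where `u` is a suffix of `S`, `a u` is not, and `a u` has an occurrence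
in `S` immediately followed by a `1`. The index `i` of that `1` is taken in `S.drop 2`, which
records that it lies beyond the first two characters. -/
lemma M3_structure {S w : List Bool} (hw : w ∈ M3 S) :
    ∃ a u, w = a :: (u ++ [false]) ∧ u <:+ S ∧ ¬ (a :: u) <:+ S ∧
      ∃ i, (S.drop 2)[i]? = some true ∧ (a :: u) <:+ S.take (i + 2) := by
  obtain ⟨⟨hne, habs, htail, -⟩, -, htS, hdS⟩ := hw
  unfold Occurs at *
  cases w with
  | nil => exact absurd rfl hne
  | cons a v =>
    rw [List.tail_cons] at htail htS
    rcases List.infix_concat_iff.mp htail with hsuf | hin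
    swap
    · exact absurd hin htS
    rcases List.suffix_concat_iff.mp hsuf with rfl | ⟨u, rfl, hu⟩
    · exact absurd List.nil_infix htS
    rw [show (a :: (u ++ [false])).dropLast = a :: u by
      rw [← List.cons_append, List.dropLast_concat]] at hdS
    have hnot : ¬ (a :: u) <:+ S := fun ⟨x, hx⟩ =>
      habs ⟨x, [], by rw [← hx]; simp⟩
    have hupos : u ≠ [] := by
      -- If `u` were empty, `0` would not occur in `S`, so `S` would end with `a = 1`.
      rintro rfl
      have hS : ∀ b ∈ S, b = true := by
        intro b hb
        cases b
        · obtain ⟨s, t, rfl⟩ := List.append_of_mem hb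
          exact absurd ⟨s, t, by simp⟩ htS
        · rfl
      have ha : a = true := hS a (hdS.subset (by simp))
      rcases List.eq_nil_or_concat S with rfl | ⟨S', b, rfl⟩
      · simp at hdS
      · have hb : b = true := hS b (by simp)
        exact hnot ⟨S', by simp [ha, hb]⟩
    refine ⟨a, u, rfl, hu, hnot, ?_⟩
    obtain ⟨x, y, hxy⟩ := hdS
    cases y with
    | nil => exact absurd ⟨x, by simpa using hxy⟩ hnot
    | cons c y =>
      cases c with
      | false => exact absurd ⟨x ++ [a], y, by simpa using hxy⟩ htS
      | true =>
        have hpos := List.length_pos_iff.mpr hupos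
        have hlen : (x ++ a :: u).length - 2 + 2 = (x ++ a :: u).length := by
          simp only [List.length_append, List.length_cons]; omega
        refine ⟨(x ++ a :: u).length - 2, ?_, ?_⟩
        · rw [List.getElem?_drop, Nat.add_comm, hlen, ← hxy,
            List.getElem?_append_right le_rfl]
          simp
        · rw [hlen, ← hxy, List.take_left]
          exact List.suffix_append _ _

/-- The comparison behind injectivity: of two words ending at the same place, the shorter one is
either equal to the longer one or a suffix of its tail. -/
lemma cons_eq_of_suffix {S u u' : List Bool} {a a' : Bool} (hu' : u' <:+ S)
    (hnot : ¬ (a :: u) <:+ S) (h : (a :: u) <:+ (a' :: u')) : a :: u = a' :: u' := by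
  rcases List.suffix_cons_iff.mp h with h | h
  · exact h
  · exact absurd (h.trans hu') hnot

theorem binary_maw_type3_le_count_ones (S : List Bool) (d : ℕ)
    (hlen : S.length = d) (hd : 3 ≤ d) :
    (M3 S).ncard ≤ (S.drop 2).count true := by
  choose! a u hw hu hnot i hi hsuf using fun w (h : w ∈ M3 S) => M3_structure h
  rw [← card_filter_getElem?_eq_count, ← Set.ncard_coe_finset]
  refine Set.ncard_le_ncard_of_injOn i ?_ ?_ (Finset.finite_toSet _)
  · intro w h
    have := (List.getElem?_eq_some_iff.mp (hi w h)).1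
    simpa using ⟨by simpa using this, by simpa using hi w h⟩
  · intro w h w' h' hii
    have hs := hsuf w h
    have hs' := hsuf w' h'
    rw [hii] at hs
    have key : a w :: u w = a w' :: u w' := by
      rcases List.suffix_or_suffix_of_suffix hs hs' with hc | hc
      · exact cons_eq_of_suffix (hu w' h') (hnot w h) hc
      · exact (cons_eq_of_suffix (hu w h) (hnot w' h') hc).symm
    rw [hw w h, hw w' h', ← List.cons_append, ← List.cons_append, key]
end

section
/- For any string S over the binary alphabet Σ₂ = {0, 1} with |S| = d ≥ 3, the cardinality of the symmetric difference MAW(S) △ MAW(S0) is at most d, where S0 denotes S with the character 0 appended to its right end. -/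
/-!
Write `T = S ++ [false]` and `d = |S|`. A word that occurs in `T` but not in `S` is a suffix of `T`.
Let `x` be the shortest suffix of `T` that does not occur in `S`, and `k = |x| ≥ 1`.
A word `w` in the symmetric difference is of one of the following kinds (`classify`):

* `w = x`, the only word that can leave the set of minimal absent words;
* `w = x ++ [b]`, when `w` is new and `w.dropLast` does not occur in `S`;
* `w = a :: s`, where `s` is a suffix of `T` not occurring in `S` and `w.dropLast` occurs in `S`.
  Then `a` differs from the letter preceding `s` in `T`, so `w` is determined by `|s|`,
  and `k ≤ |s| ≤ d - 1`.

This gives the bound `3 + (d - k)`, which suffices for `k ≥ 3`. If `k = 1`, then `S` consists of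
`true` only and the third kind is empty, leaving `3 ≤ d` words. If `k = 2`, one word has to be saved.
A word of the third kind with `|s| = d - 1` forces `S = false :: true ^ (d - 1)`
(`FlipWord.eq_of_length`), and for that `S` the word `x ++ [false] = [true, false, false]` is not
minimal absent, since `[false, false]` does not occur in `T`.
-/

open scoped symmDiff

/-- The suffix of length `i` of `S ++ [false]` (for `i ≤ |S| + 1`). -/
def suf (S : List Bool) (i : ℕ) : List Bool := (S ++ [false]).drop (S.length + 1 - i)

/-- The suffix of length `i` of `S ++ [false]`, preceded by the letter opposite to the one that
precedes it there (for `i ≤ |S|`). -/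
def flipSuf (S : List Bool) (i : ℕ) : List Bool := (!(S.getD (S.length - i) false)) :: suf S i

/-- The words `w = a :: s` of the third kind: `w` is absent from `S ++ [false]`, `s` is a suffix of
`S ++ [false]` that does not occur in `S`, and `w.dropLast` occurs in `S`. -/
def FlipWord (S w : List Bool) : Prop :=
  ∃ a s, w = a :: s ∧ ¬ (a :: s) <:+: S ++ [false] ∧ s <:+ S ++ [false] ∧ ¬ s <:+: S ∧
    (a :: s).dropLast <:+: S

lemma eq_suf {S s : List Bool} (h : s <:+ S ++ [false]) : s = suf S s.length := by
  have := List.suffix_iff_eq_drop.1 h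
  simpa [suf] using this

lemma suf_suffix (S : List Bool) (i : ℕ) : suf S i <:+ S ++ [false] := List.drop_suffix _ _

lemma suf_length {S : List Bool} {i : ℕ} (h : i ≤ S.length + 1) : (suf S i).length = i := by
  simp [suf]; omega

lemma dropLast_infix_of_concat {S u : List Bool} {a : Bool} (h : u <:+: S ++ [a]) :
    u.dropLast <:+: S := by
  rcases List.infix_concat_iff.1 h with h | h
  · rcases List.eq_nil_or_concat u with rfl | ⟨v, b, rfl⟩
    · simp
    · obtain ⟨r, hr⟩ := h
      simp only [List.concat_eq_append] at hr ⊢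
      rw [← List.append_assoc] at hr
      obtain ⟨h1, -⟩ := List.append_inj' hr rfl
      rw [List.dropLast_concat, ← h1]
      exact (List.suffix_append r v).isInfix
  · exact (List.dropLast_prefix u).isInfix.trans h

/-- A suffix of `S ++ [false]` that is absent from `S` while its tail is not is the shortest absent
suffix. -/
lemma eq_suf_of_tail {S s : List Bool} {k : ℕ} (hk : ¬ suf S k <:+: S)
    (hmin : ∀ i < k, suf S i <:+: S) (hs : s <:+ S ++ [false]) (h1 : ¬ s <:+: S)
    (h2 : s.tail <:+: S) : s = suf S k := by
  have e := eq_suf hs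
  have e2 := eq_suf ((List.tail_suffix s).trans hs)
  have : ¬ s.length < k := fun h => h1 (e ▸ hmin _ h)
  have hle : ¬ k < s.length := by
    intro h
    apply hk
    have : suf S k <:+ s.tail := by
      apply List.suffix_of_suffix_length_le (suf_suffix S k) ((List.tail_suffix s).trans hs)
      rw [suf_length, List.length_tail]
      · omega
      · have := hs.length_le
        simp at this
        omega
    exact this.isInfix.trans h2
  rw [e]; congr 1; omega

lemma classify {S w : List Bool} {k : ℕ} (hk : ¬ suf S k <:+: S)
    (hmin : ∀ i < k, suf S i <:+: S) (hw : w ∈ MAW S ∆ MAW (S ++ [false])) :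
    w = suf S k ∨ (∃ b, w = suf S k ++ [b] ∧ w.tail <:+: S ++ [false]) ∨ FlipWord S w := by
  have hS : S <:+: S ++ [false] := (List.prefix_append _ _).isInfix
  rcases hw with ⟨⟨hne, h0, h1, h2⟩, hn⟩ | ⟨⟨hne, h0, h1, h2⟩, hn⟩
  · left
    have : w <:+: S ++ [false] := by
      by_contra hc
      exact hn ⟨hne, hc, h1.trans hS, h2.trans hS⟩
    rcases List.infix_concat_iff.1 this with h | h
    · exact eq_suf_of_tail hk hmin h h0 h1
    · exact absurd h h0
  · right
    have hwS : ¬ w <:+: S := fun h => h0 (h.trans hS)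
    by_cases hd : w.dropLast <:+: S
    · right
      have ht : ¬ w.tail <:+: S := fun h => hn ⟨hne, hwS, h, hd⟩
      cases w with
      | nil => exact absurd rfl hne
      | cons a s =>
        refine ⟨a, s, rfl, h0, ?_, ht, hd⟩
        rcases List.infix_concat_iff.1 h1 with h | h
        · exact h
        · exact absurd h ht
    · left
      have hsuf : w.dropLast <:+ S ++ [false] := by
        rcases List.infix_concat_iff.1 h2 with h | h
        · exact h
        · exact absurd h hd
      have ht : w.dropLast.tail <:+: S := by
        have := dropLast_infix_of_concat h1
        rwa [← List.tail_dropLast] at this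
      refine ⟨w.getLast hne, ?_, h1⟩
      rw [← eq_suf_of_tail hk hmin hsuf hd ht, List.dropLast_append_getLast]

/-- Both the occurrence of `w.dropLast` in `S` and the suffix occurrence of `s.dropLast` in `S`,
written out; the letters preceding `s.dropLast` in these two places differ. -/
lemma FlipWord.decomp {S w : List Bool} (h : FlipWord S w) :
    ∃ a c s' p q r, w = a :: (s' ++ [false]) ∧ a ≠ c ∧ S = p ++ (a :: s') ++ q ∧
      S = r ++ c :: s' ∧ ¬ (a :: (s' ++ [false])) <:+: S ++ [false] ∧
      s' ++ [false] <:+ S ++ [false] ∧ ¬ (s' ++ [false]) <:+: S := by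
  obtain ⟨a, s, rfl, h0, hs, hns, hd⟩ := h
  rcases List.eq_nil_or_concat s with rfl | ⟨s', b, rfl⟩
  · simp at hns
  simp only [List.concat_eq_append] at *
  obtain ⟨r, hr0⟩ := id hs
  rw [← List.append_assoc] at hr0
  obtain ⟨hr, hb⟩ := List.append_inj' hr0 rfl
  simp only [List.cons.injEq, and_true] at hb
  subst hb
  rw [← List.cons_append, List.dropLast_concat] at hd
  obtain ⟨p, q, hpq⟩ := hd
  rcases List.eq_nil_or_concat r with rfl | ⟨r', c, rfl⟩
  · have := congrArg List.length hpq
    have := congrArg List.length hr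
    simp at *
    omega
  refine ⟨a, c, s', p, q, r', rfl, ?_, hpq.symm, by rw [← hr]; simp, h0, hs, hns⟩
  rintro rfl
  apply h0
  refine ⟨r', [], ?_⟩
  rw [← hr]
  simp

lemma FlipWord.eq_flipSuf {S w : List Bool} (h : FlipWord S w) {k : ℕ}
    (hmin : ∀ i < k, suf S i <:+: S) :
    ∃ i, k ≤ i ∧ i + 1 ≤ S.length ∧ w = flipSuf S i ∧ w.length = i + 1 := by
  obtain ⟨a, c, s', p, q, r, rfl, hac, hp, hr, h0, hs, hns⟩ := h.decomp
  have e := eq_suf hs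
  have l1 := congrArg List.length hp
  have l2 := congrArg List.length hr
  simp only [List.length_append, List.length_cons] at l1 l2
  refine ⟨s'.length + 1, ?_, ?_, ?_, by simp⟩
  · by_contra hc
    apply hns
    rw [e]
    apply hmin
    simp; omega
  · by_contra hc
    have hp0 : p = [] := List.length_eq_zero_iff.1 (by omega)
    have hr0 : r = [] := List.length_eq_zero_iff.1 (by omega)
    have hq0 : q = [] := List.length_eq_zero_iff.1 (by omega)
    subst hp0 hr0 hq0
    rw [hp] at hr
    simp at hr
    exact hac hr
  · have hlen : S.length - (s'.length + 1) = r.length := by omega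
    have hg : S.getD r.length false = c := by rw [hr]; simp
    rw [flipSuf, hlen, hg]
    simp only [List.length_append, List.length_singleton] at e
    rw [← e]
    cases a <;> cases c <;> simp_all

lemma eq_replicate_of_shift (t : Bool) : ∀ (s : List Bool) (c : Bool), s ++ [t] = c :: s →
    c = t ∧ s = List.replicate s.length t
  | [], c, h => by simpa using h.symm
  | e :: u, c, h => by
    simp only [List.cons_append, List.cons.injEq] at h
    obtain ⟨h1, h2⟩ := eq_replicate_of_shift t u e h.2
    subst h1
    exact ⟨h.1.symm, by rw [List.length_cons, List.replicate_succ, ← h2]⟩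

lemma FlipWord.eq_of_length {S w : List Bool} (h : FlipWord S w) (hl : w.length = S.length) :
    S = false :: List.replicate (S.length - 1) true := by
  obtain ⟨a, c, s', p, q, r, rfl, hac, hp, hr, h0, hs, hns⟩ := h.decomp
  have l1 := congrArg List.length hp
  have l2 := congrArg List.length hr
  simp only [List.length_append, List.length_cons, List.length_nil] at l1 l2 hl
  -- The occurrence of `a :: s'` is a prefix of `S`: as a suffix it would clash with `c :: s'`.
  have hp0 : p = [] := by
    by_contra hne
    have : 0 < p.length := List.length_pos_iff.2 hne
    have hq0 : q = [] := List.length_eq_zero_iff.1 (by omega)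
    subst hq0
    rw [hp, List.append_nil] at hr
    have := (List.append_inj' hr (by simp)).2
    simp at this
    exact hac this
  subst hp0
  obtain ⟨e, rfl⟩ := List.length_eq_one_iff.1 (show q.length = 1 by simp at l1; omega)
  obtain ⟨y, rfl⟩ := List.length_eq_one_iff.1 (show r.length = 1 by omega)
  have he : e = true := by
    cases e
    · exfalso
      apply h0
      rw [hp]
      exact ⟨[], [false], by simp⟩
    · rfl
  subst he
  have hsh : s' ++ [true] = c :: s' := by
    have := hp.symm.trans hr
    simp at this
    exact this.2
  obtain ⟨rfl, hrep⟩ := eq_replicate_of_shift true s' c hsh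
  have ha : a = false := by simpa using hac
  have e1 : S.length - 1 = s'.length + 1 := by omega
  rw [e1, List.replicate_succ, ← hrep, ← hsh, hp, ha]
  simp

/-- If `k = 1`, then `S` has no letter `false`, so no letter can differ from another one. -/
lemma not_flipWord {S w : List Bool} (h1 : ¬ suf S 1 <:+: S) : ¬ FlipWord S w := by
  intro h
  obtain ⟨a, c, s', p, q, r, -, hac, hp, hr, -⟩ := h.decomp
  have hf : false ∉ S := by
    intro hm
    apply h1
    obtain ⟨u, v, huv⟩ := List.append_of_mem hm
    exact ⟨u, v, by simp [suf, huv]⟩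
  have ha : a ∈ S := by rw [hp]; simp
  have hc : c ∈ S := by rw [hr]; simp
  cases a <;> cases c <;> simp_all

lemma not_infix_false_false {n : ℕ} (hn : 1 ≤ n) :
    ¬ [false, false] <:+: (false :: List.replicate n true) ++ [false] := by
  intro h
  obtain ⟨m, rfl⟩ : ∃ m, n = m + 1 := ⟨n - 1, by omega⟩
  rw [List.cons_append, List.infix_cons_iff] at h
  rcases h with h | h
  · simp [List.replicate_succ] at h
  · have := (dropLast_infix_of_concat h).subset (a := false) (by simp)
    simp at this

theorem binary_maw_symmDiff_le_d (S : List Bool) (d : ℕ) (hlen : S.length = d) (hd : 3 ≤ d) :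
    (MAW S ∆ MAW (S ++ [false])).ncard ≤ d := by
  classical
  have hex : ∃ k, ¬ suf S k <:+: S := by
    refine ⟨S.length + 1, fun h => ?_⟩
    have := h.length_le
    rw [suf_length le_rfl] at this
    omega
  obtain ⟨k, hk, hmin⟩ : ∃ k, ¬ suf S k <:+: S ∧ ∀ i < k, suf S i <:+: S :=
    ⟨Nat.find hex, Nat.find_spec hex, fun i hi => not_not.1 (Nat.find_min hex hi)⟩
  have hk0 : k ≠ 0 := by
    rintro rfl
    exact hk (by simp [suf])
  have key : ∀ (A : Finset (List Bool)) (B : Finset ℕ), A.card + B.card ≤ d →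
      (∀ w ∈ MAW S ∆ MAW (S ++ [false]), w ∈ A ∨ ∃ i ∈ B, w = flipSuf S i) →
      (MAW S ∆ MAW (S ++ [false])).ncard ≤ d := by
    intro A B hc hsub
    have : MAW S ∆ MAW (S ++ [false]) ⊆ ((A ∪ B.image (flipSuf S) : Finset _) : Set _) := by
      intro w hw
      rw [Finset.mem_coe, Finset.mem_union, Finset.mem_image]
      rcases hsub w hw with h | ⟨i, hi, rfl⟩
      · exact Or.inl h
      · exact Or.inr ⟨i, hi, rfl⟩
    refine (Set.ncard_le_ncard this (Finset.finite_toSet _)).trans ?_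
    rw [Set.ncard_coe_finset]
    exact (Finset.card_union_le _ _).trans ((Nat.add_le_add_left Finset.card_image_le _).trans hc)
  have h3 : ({suf S k, suf S k ++ [false], suf S k ++ [true]} : Finset (List Bool)).card ≤ 3 :=
    Finset.card_le_three
  rcases (by omega : k = 1 ∨ k = 2 ∨ 3 ≤ k) with rfl | rfl | hk3
  · refine key {suf S 1, suf S 1 ++ [false], suf S 1 ++ [true]} ∅
      (by simp only [Finset.card_empty]; omega) ?_
    intro w hw
    rcases classify hk hmin hw with h | ⟨b, h, -⟩ | h
    · simp [h]
    · cases b <;> simp [h]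
    · exact absurd h (not_flipWord hk)
  · by_cases hS : S = false :: List.replicate (S.length - 1) true
    · have h2 : ({suf S 2, suf S 2 ++ [true]} : Finset (List Bool)).card ≤ 2 := Finset.card_le_two
      refine key {suf S 2, suf S 2 ++ [true]} (Finset.Ico 2 d)
        (by simp only [Nat.card_Ico]; omega) ?_
      intro w hw
      rcases classify hk hmin hw with h | ⟨b, h, ht⟩ | h
      · simp [h]
      · cases b
        · exfalso
          rw [h] at ht
          have hl : (suf S 2).length = 2 := suf_length (by omega)
          obtain ⟨y, z, hyz⟩ := List.length_eq_two.1 hl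
          have hz : z = false := by
            obtain ⟨r, hr⟩ := suf_suffix S 2
            rw [hyz, show r ++ [y, z] = (r ++ [y]) ++ [z] by simp] at hr
            simpa using (List.append_inj' hr rfl).2
          rw [hyz, hz, hS] at ht
          exact not_infix_false_false (by omega) ht
        · simp [h]
      · obtain ⟨i, hi1, hi2, hi3, -⟩ := h.eq_flipSuf hmin
        exact Or.inr ⟨i, by simp; omega, hi3⟩
    · refine key {suf S 2, suf S 2 ++ [false], suf S 2 ++ [true]} (Finset.Ico 2 (d - 1))
        (by simp only [Nat.card_Ico]; omega) ?_
      intro w hw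
      rcases classify hk hmin hw with h | ⟨b, h, -⟩ | h
      · simp [h]
      · cases b <;> simp [h]
      · obtain ⟨i, hi1, hi2, hi3, hi4⟩ := h.eq_flipSuf hmin
        have : i + 1 ≠ S.length := fun hc => hS (h.eq_of_length (hi4.trans hc))
        exact Or.inr ⟨i, by simp; omega, hi3⟩
  · refine key {suf S k, suf S k ++ [false], suf S k ++ [true]} (Finset.Ico k d)
      (by simp only [Nat.card_Ico]; omega) ?_
    intro w hw
    rcases classify hk hmin hw with h | ⟨b, h, -⟩ | h
    · simp [h]
    · cases b <;> simp [h]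
    · obtain ⟨i, hi1, hi2, hi3, -⟩ := h.eq_flipSuf hmin
      exact Or.inr ⟨i, by simp; omega, hi3⟩
end

section
/- For every integer d ≥ 3, let S' = 0·0·1^{d-2} (two copies of the character 0 followed by d−2 copies of the character 1). Then the set of MAWs added by appending 0 to S' is MAW(S'0) \ MAW(S') = {100, 101} ∪ {0 1^k 0 : 1 ≤ k ≤ d−3}, which has exactly d−1 elements, and |MAW(S') △ MAW(S'0)| = d; hence the upper bound d on the number of changes of MAWs for binary strings of length d ≥ 3 under appending a character is tight. -/
/-!
Write `S = 001ⁿ` and `T = S0` with `n = d - 2 ≥ 1`. The string `S` is sorted (for `0 < 1`), hence so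
is each of its factors. A factor of `T` that is not a factor of `S` is a suffix of `T` containing
`10`, so it is one of `1ʲ0` with `1 ≤ j ≤ n`, `01ⁿ0` and `001ⁿ0` (`occurs_T_cases`). In particular
it is unsorted, but becomes sorted once its last letter is deleted (`dropLast_sorted`).

If `w` is a MAW of `T` but not of `S`, then `w.tail` or `w.dropLast` is such a new factor. When
`w.dropLast` is new, `w.tail.dropLast` must be sorted, which forces `w.dropLast = 10`. When
`w.tail` is new, inspecting the possible first letters leaves only `01ᵏ0` with `1 ≤ k < n`. If `w`
is a MAW of `S` but not of `T`, then `w` itself is a new factor whose tail is sorted, so `w = 10`.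
The two set differences therefore have `2 + (n - 1) = d - 1` elements and one element.
-/

open scoped symmDiff

/-- The string `0 0 1ⁿ`. -/
abbrev strS (n : ℕ) : List Bool := false :: false :: List.replicate n true

/-- The string `0 0 1ⁿ 0`. -/
abbrev strT (n : ℕ) : List Bool := strS n ++ [false]

/-- The string is nondecreasing for `false < true`, that is, it does not contain `10`. -/
abbrev Srt (x : List Bool) : Prop := x.Pairwise (· ≤ ·)

@[simp] lemma not_true_le_false : ¬ true ≤ false := by decide

lemma sorted_S (n : ℕ) : Srt (strS n) := by
  simp [List.pairwise_cons, List.pairwise_replicate]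

lemma sorted_of_occurs_S {n : ℕ} {x : List Bool} (h : x <:+: strS n) : Srt x :=
  (sorted_S n).sublist h.sublist

lemma not_sorted_ones (j : ℕ) (hj : 1 ≤ j) : ¬ Srt (List.replicate j true ++ [false]) := by
  intro h
  have := (List.pairwise_append.1 h).2.2 true (by simp; omega) false (by simp)
  simp at this

lemma suffix_ones {n : ℕ} {x : List Bool} (h : x <:+ List.replicate n true ++ [false]) :
    x = [] ∨ ∃ j ≤ n, x = List.replicate j true ++ [false] := by
  induction n with
  | zero =>
    rw [List.replicate_zero, List.nil_append, List.suffix_cons_iff] at h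
    rcases h with h | h
    · exact .inr ⟨0, le_rfl, by simpa using h⟩
    · exact .inl (by simpa using h)
  | succ n ih =>
    rw [List.replicate_succ, List.cons_append, List.suffix_cons_iff] at h
    rcases h with h | h
    · exact .inr ⟨n + 1, le_rfl, by simpa [List.replicate_succ] using h⟩
    · rcases ih h with h | ⟨j, hj, h⟩
      · exact .inl h
      · exact .inr ⟨j, by omega, h⟩

lemma occurs_T_of_S {n : ℕ} {x : List Bool} (h : x <:+: strS n) : x <:+: strT n :=
  List.infix_concat_iff.2 (.inr h)

/-- The factors of `001ⁿ0` are those of `001ⁿ` together with the suffixes that contain `10`. -/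
lemma occurs_T_cases {n : ℕ} {x : List Bool} (h : x <:+: strT n) :
    x <:+: strS n ∨ (∃ j, 1 ≤ j ∧ j ≤ n ∧ x = List.replicate j true ++ [false]) ∨
      x = false :: (List.replicate n true ++ [false]) ∨
      x = false :: false :: (List.replicate n true ++ [false]) := by
  rcases List.infix_concat_iff.1 h with h | h
  · simp only [List.cons_append, List.suffix_cons_iff] at h
    rcases h with h | h | h
    · exact .inr (.inr (.inr h))
    · exact .inr (.inr (.inl h))
    · rcases suffix_ones h with h | ⟨j, hj, h⟩
      · exact .inl (h ▸ List.nil_infix)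
      · rcases Nat.eq_zero_or_pos j with rfl | hp
        · refine .inl ⟨[], false :: List.replicate n true, by simp [h]⟩
        · exact .inr (.inl ⟨j, hp, hj, h⟩)
  · exact .inl h

/-- A factor of `001ⁿ0` that is not a factor of `001ⁿ` consists of a suffix of `001ⁿ` and the
appended letter. -/
lemma new_eq_concat {n : ℕ} {x : List Bool} (h : x <:+: strT n) (hx : ¬ x <:+: strS n) :
    ∃ y, x = y ++ [false] ∧ y <:+ strS n := by
  rcases List.infix_concat_iff.1 h with h | h
  · rcases List.suffix_concat_iff.1 h with h | ⟨y, h, hy⟩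
    · exact absurd (h ▸ List.nil_infix) hx
    · exact ⟨y, h, hy⟩
  · exact absurd h hx

/-- At most the last letter of a factor of `001ⁿ0` breaks sortedness. -/
lemma dropLast_sorted {n : ℕ} {y : List Bool} {a : Bool} (h : y ++ [a] <:+: strT n) : Srt y := by
  by_cases hx : y ++ [a] <:+: strS n
  · exact (sorted_of_occurs_S hx).sublist (List.sublist_append_left _ _)
  · obtain ⟨z, hz, hs⟩ := new_eq_concat h hx
    obtain ⟨rfl, -⟩ := List.append_inj' hz rfl
    exact sorted_of_occurs_S hs.isInfix

lemma ones_occurs_T {n j : ℕ} (hj : j ≤ n) : List.replicate j true ++ [false] <:+: strT n :=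
  ⟨false :: false :: List.replicate (n - j) true, [], by
    have : List.replicate n true = List.replicate (n - j) true ++ List.replicate j true := by
      rw [← List.replicate_add]; congr 1; omega
    rw [strT, strS, this]
    simp only [List.cons_append, List.append_assoc, List.append_nil]⟩

lemma zero_ones_occurs_S {n j : ℕ} (hj : j ≤ n) : false :: List.replicate j true <:+: strS n :=
  ⟨[false], List.replicate (n - j) true, by
    have : List.replicate n true = List.replicate j true ++ List.replicate (n - j) true := by
      rw [← List.replicate_add]; congr 1; omega
    simp [strS, this]⟩

/-- A word ending in `1` that is a factor of `001ⁿ0` avoids the appended letter. -/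
lemma occurs_S_of_ends_true {n : ℕ} {y : List Bool} (h : y ++ [true] <:+: strT n) :
    y ++ [true] <:+: strS n := by
  by_contra hx
  obtain ⟨z, hz, -⟩ := new_eq_concat h hx
  have := (List.append_inj' hz rfl).2
  simp at this

/-- If a word `w = ua` has both `u` and its tail occurring in `001ⁿ0`, with `u` absent from `001ⁿ`,
then `u = 10`. -/
lemma eq_of_dropLast_new {n : ℕ} (hn : 1 ≤ n) {u : List Bool} {a : Bool}
    (hu : u <:+: strT n) (hS : ¬ u <:+: strS n) (ht : (u ++ [a]).tail <:+: strT n) :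
    u = [true, false] := by
  -- the tail of `u`, which is `w.tail` minus its last letter, is sorted
  have key : ∀ c y, u = c :: y → Srt y := by
    rintro c y rfl
    exact dropLast_sorted (a := a) (by simpa using ht)
  rcases occurs_T_cases hu with h | ⟨j, h1, hj, rfl⟩ | rfl | rfl
  · exact absurd h hS
  · obtain ⟨i, rfl⟩ := Nat.exists_eq_add_of_le' h1
    have := key true (List.replicate i true ++ [false]) (by simp [List.replicate_succ])
    rcases Nat.eq_zero_or_pos i with rfl | hi
    · rfl
    · exact absurd this (not_sorted_ones i hi)
  · exact absurd (key _ _ rfl) (not_sorted_ones n hn)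
  · exact absurd ((key _ _ rfl).sublist (List.sublist_cons_self _ _)) (not_sorted_ones n hn)

/-- If `w = at` is a MAW of `001ⁿ0` whose tail `t` is absent from `001ⁿ`, then `w = 01ᵏ0` with
`1 ≤ k < n`. -/
lemma eq_of_tail_new {n : ℕ} (hn : 1 ≤ n) {t : List Bool} {a : Bool}
    (ht : t <:+: strT n) (hS : ¬ t <:+: strS n) (hw : ¬ a :: t <:+: strT n)
    (hd : (a :: t).dropLast <:+: strT n) :
    ∃ k, 1 ≤ k ∧ k ≤ n - 1 ∧ a :: t = false :: (List.replicate k true ++ [false]) := by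
  obtain ⟨m, rfl⟩ := Nat.exists_eq_add_of_le' hn
  rcases occurs_T_cases ht with h | ⟨j, h1, hj, rfl⟩ | rfl | rfl
  · exact absurd h hS
  · cases a
    · refine ⟨j, h1, ?_, rfl⟩
      by_contra hk
      obtain rfl : j = m + 1 := by omega
      exact hw ⟨[false], [], by simp⟩
    · rcases Nat.lt_or_ge j (m + 1) with hlt | hge
      · exact absurd (by simpa [List.replicate_succ] using ones_occurs_T (j := j + 1) hlt) hw
      · -- `1ⁿ⁺¹` has too many ones to occur
        obtain rfl : j = m + 1 := by omega
        have := hd.sublist.count_le true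
        rw [← List.cons_append, List.dropLast_concat] at this
        simp at this
  · cases a
    · exact absurd ⟨[], [], by simp⟩ hw
    · -- `101ⁿ` is unsorted and ends with `1`
      rw [← List.cons_append, ← List.cons_append, List.dropLast_concat,
        List.replicate_succ', ← List.cons_append, ← List.cons_append] at hd
      have := sorted_of_occurs_S (occurs_S_of_ends_true hd)
      simp [List.pairwise_cons] at this
  · -- `a001ⁿ` ends with `1` and is longer than `001ⁿ`
    rw [← List.cons_append, ← List.cons_append, ← List.cons_append, List.dropLast_concat,
      List.replicate_succ', ← List.cons_append, ← List.cons_append, ← List.cons_append] at hd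
    have := (occurs_S_of_ends_true hd).length_le
    simp at this

/-- The MAWs `100`, `101` and `01ᵏ0`, `1 ≤ k < n`, created by appending `0`. -/
abbrev addedMAW (n : ℕ) : Set (List Bool) :=
  {[true, false, false], [true, false, true]} ∪
    {w | ∃ k : ℕ, 1 ≤ k ∧ k ≤ n - 1 ∧ w = false :: (List.replicate k true ++ [false])}

lemma added_eq {n : ℕ} (hn : 1 ≤ n) : MAW (strT n) \ MAW (strS n) = addedMAW n := by
  have h10 : [true, false] <:+: strT n := ones_occurs_T (j := 1) hn
  have h10' : ¬ [true, false] <:+: strS n := fun h => by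
    simpa using sorted_of_occurs_S h
  ext w
  constructor
  · rintro ⟨⟨hne, hw, ht, hd⟩, hS⟩
    unfold Occurs at hw ht hd
    by_cases htS : w.tail <:+: strS n
    · have hdS : ¬ w.dropLast <:+: strS n := fun h =>
        hS ⟨hne, fun h' => hw (occurs_T_of_S h'), htS, h⟩
      left
      have hw' := List.dropLast_append_getLast hne
      have := eq_of_dropLast_new hn (a := w.getLast hne) hd hdS (by rwa [hw'])
      rw [this] at hw'
      rw [← hw']
      cases w.getLast hne <;> simp
    · right
      obtain ⟨a, t, rfl⟩ := List.exists_cons_of_ne_nil hne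
      exact eq_of_tail_new hn ht htS hw hd
  · rintro ((rfl | rfl) | ⟨k, h1, hk, rfl⟩)
    · refine ⟨⟨by simp, fun h => ?_, ⟨[], List.replicate n true ++ [false], by simp⟩, h10⟩,
        fun h => h10' h.2.2.2⟩
      simpa using dropLast_sorted (y := [true, false]) h
    · refine ⟨⟨by simp, fun h => ?_, occurs_T_of_S (zero_ones_occurs_S (j := 1) hn), h10⟩,
        fun h => h10' h.2.2.2⟩
      simpa using dropLast_sorted (y := [true, false]) h
    · have hu := not_sorted_ones k h1
      refine ⟨⟨by simp, fun h => ?_, ones_occurs_T (by omega), ?_⟩,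
        fun h => hu (sorted_of_occurs_S h.2.2.1)⟩
      · obtain ⟨i, rfl⟩ := Nat.exists_eq_add_of_le' h1
        rcases occurs_T_cases h with h | ⟨j, hj, -, h⟩ | h | h
        · exact hu ((sorted_of_occurs_S h).sublist (List.sublist_cons_self _ _))
        · obtain ⟨l, rfl⟩ := Nat.exists_eq_add_of_le' hj
          simp [List.replicate_succ] at h
        · have := congrArg List.length h
          simp at this
          omega
        · simp [List.replicate_succ] at h
      · rw [← List.cons_append, List.dropLast_concat]
        exact occurs_T_of_S (zero_ones_occurs_S (by omega))

lemma removed_eq {n : ℕ} (hn : 1 ≤ n) : MAW (strS n) \ MAW (strT n) = {[true, false]} := by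
  have h10 : [true, false] <:+: strT n := ones_occurs_T (j := 1) hn
  ext w
  constructor
  · rintro ⟨⟨hne, hw, ht, hd⟩, hT⟩
    have hwT : w <:+: strT n := by
      by_contra h
      exact hT ⟨hne, h, occurs_T_of_S ht, occurs_T_of_S hd⟩
    have hs := sorted_of_occurs_S ht
    rcases occurs_T_cases hwT with h | ⟨j, h1, hj, rfl⟩ | rfl | rfl
    · exact absurd h hw
    · obtain ⟨i, rfl⟩ := Nat.exists_eq_add_of_le' h1
      rcases Nat.eq_zero_or_pos i with rfl | hi
      · rfl
      · exact absurd (by simpa [List.replicate_succ] using hs) (not_sorted_ones i hi)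
    · exact absurd hs (not_sorted_ones n hn)
    · exact absurd (hs.sublist (List.sublist_cons_self _ _)) (not_sorted_ones n hn)
  · rintro rfl
    refine ⟨⟨by simp, fun h => ?_, ⟨[], false :: List.replicate n true, by simp⟩, ?_⟩,
      fun h => h.2.1 h10⟩
    · simpa using sorted_of_occurs_S h
    · obtain ⟨m, rfl⟩ := Nat.exists_eq_add_of_le' hn
      exact ⟨false :: false :: List.replicate m true, [], by simp [List.replicate_succ']⟩

lemma added_ncard {n : ℕ} (hn : 1 ≤ n) : (addedMAW n).Finite ∧ (addedMAW n).ncard = n + 1 := by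
  have himg : {w | ∃ k : ℕ, 1 ≤ k ∧ k ≤ n - 1 ∧ w = false :: (List.replicate k true ++ [false])} =
      (fun k => false :: (List.replicate k true ++ [false])) '' Set.Icc 1 (n - 1) := by
    ext w
    simp [and_assoc, eq_comm]
  have hfin := (Set.finite_Icc 1 (n - 1)).image
    (fun k => false :: (List.replicate k true ++ [false]))
  have hpair : ({[true, false, false], [true, false, true]} : Set (List Bool)).Finite :=
    Set.toFinite _
  rw [addedMAW, himg]
  refine ⟨hpair.union hfin, ?_⟩
  rw [Set.ncard_union_eq ?_ hpair hfin, Set.ncard_pair (by simp), Set.ncard_image_of_injective,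
    Set.ncard_Icc_nat]
  · omega
  · intro a b h
    simpa using congrArg List.length h
  · rw [Set.disjoint_left]
    rintro x (rfl | rfl) ⟨k, -, h⟩ <;> simp at h

theorem binary_maw_bound_tight (d : ℕ) (hd : 3 ≤ d) :
    MAW ((false :: false :: List.replicate (d - 2) true) ++ [false]) \
        MAW (false :: false :: List.replicate (d - 2) true) =
      ({[true, false, false], [true, false, true]} ∪
        {w | ∃ k : ℕ, 1 ≤ k ∧ k ≤ d - 3 ∧
          w = false :: (List.replicate k true ++ [false])} : Set (List Bool)) ∧
    (MAW ((false :: false :: List.replicate (d - 2) true) ++ [false]) \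
        MAW (false :: false :: List.replicate (d - 2) true)).ncard = d - 1 ∧
    (MAW (false :: false :: List.replicate (d - 2) true) ∆
        MAW ((false :: false :: List.replicate (d - 2) true) ++ [false])).ncard = d := by
  obtain ⟨n, rfl⟩ := Nat.exists_eq_add_of_le' (show 2 ≤ d by omega)
  have hn : 1 ≤ n := by omega
  have hA : MAW (strT n) \ MAW (strS n) = addedMAW n := added_eq hn
  have hR : MAW (strS n) \ MAW (strT n) = {[true, false]} := removed_eq hn
  obtain ⟨hfin, hcard⟩ := added_ncard hn
  refine ⟨hA, ?_, ?_⟩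
  · exact (congrArg Set.ncard hA).trans hcard
  · change (MAW (strS n) ∆ MAW (strT n)).ncard = n + 2
    rw [Set.symmDiff_def, Set.ncard_union_eq disjoint_sdiff_sdiff (hR ▸ Set.finite_singleton _)
      (hA ▸ hfin), hR, hA, Set.ncard_singleton, hcard]
    omega
end

section
/- For any string S over the binary alphabet Σ₂ = {0, 1} with |S| = d ≥ 1, the cardinality of the symmetric difference MAW(S) △ MAW(S0) is at most max{3, d}, where S0 denotes S with the character 0 appended to its right end. -/
/-!
Write `T = S0`, `d = |S|`, and let `v` be the shortest suffix of `T` that does not occur in `S`, so that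
a suffix of `T` occurs in `S` exactly when it is shorter than `v`.

* The only MAW of `S` that can disappear is `v`.
* A new MAW whose prefix is absent from `S` has the form `vb` with `b` a character such that
  `(tail v) b` occurs in `T`: there are at most two of them.
* A new MAW whose prefix occurs in `S` has the form `a u 0`, where `c u` is a suffix of `S` with `c ≠ a`
  and `a u` occurs in `S`. As the alphabet is binary, `a` is determined by `u`, hence by `|u|`; as
  `a u` and `c u` are different factors of `S`, such a word has length between `|v| + 1` and `d`. So there
  are at most `d - |v|` of them.

This gives the bound `3 + (d - |v|)`, which suffices unless `|v| = 1`, or `|v| = 2` and `3 ≤ d`.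
If `|v| = 1` then `S` is a power of `1` and the last kind is empty. If `|v| = 2`, one word is saved:
for `v = 00` the last kind has no word of length `3`; for `v = 10` the word `S` has the form `0…01…1`, and
either `00` is absent, which excludes `v0`, or `S` starts with `00`, which excludes length `d` from
the last kind.
-/

open scoped symmDiff

/-- The words `a u 0` with `|u| + 1 ≥ p` such that `a u` occurs in `S` and `c u` is a suffix of `S` for
some character `c ≠ a`. They contain all new MAWs of `S0` whose longest proper prefix occurs in `S`. -/
def leftExt (S : List Bool) (p : ℕ) : Set (List Bool) :=
  {w | ∃ a u, w = a :: (u ++ [false]) ∧ p ≤ u.length + 1 ∧ (a :: u) <:+: S ∧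
    ∃ c, c ≠ a ∧ (c :: u) <:+ S}

/-- The words `v b` such that `b`, preceded by `v` without its first character, occurs in `S0`. -/
def rightExt (S v : List Bool) : Set (List Bool) :=
  {w | ∃ b, w = v ++ [b] ∧ (v.tail ++ [b]) <:+: S ++ [false]}

lemma infix_append_false {w S : List Bool} (h : w <:+: S ++ [false]) (hS : ¬ w <:+: S) :
    w <:+ S ++ [false] := by
  rw [List.infix_concat_iff] at h
  tauto

lemma exists_shortest_absent_suffix (S : List Bool) :
    ∃ v, v <:+ S ++ [false] ∧
      ∀ w, w <:+ S ++ [false] → (w <:+: S ↔ w.length < v.length) := by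
  classical
  have hex : ∃ n, ∃ v, v <:+ S ++ [false] ∧ ¬ v <:+: S ∧ v.length = n :=
    ⟨_, S ++ [false], List.suffix_rfl, fun h => by simpa using h.length_le, rfl⟩
  obtain ⟨v, hv, hvS, hlen⟩ := Nat.find_spec hex
  refine ⟨v, hv, fun w hw => ⟨fun h => ?_, fun h => ?_⟩⟩
  · by_contra hlt
    exact hvS ((List.suffix_of_suffix_length_le hv hw (by omega)).isInfix.trans h)
  · by_contra hwS
    exact Nat.find_min hex (m := w.length) (by omega) ⟨w, hw, hwS, rfl⟩

/-- The three kinds of words in the symmetric difference, where `v` is the shortest suffix of `S0`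
absent from `S`. -/
lemma symmDiff_subset {S v : List Bool} (hv : v <:+ S ++ [false])
    (hmin : ∀ w, w <:+ S ++ [false] → (w <:+: S ↔ w.length < v.length)) :
    MAW S ∆ MAW (S ++ [false]) ⊆ ({v} ∪ rightExt S v) ∪ leftExt S v.length := by
  have hST : S <:+: S ++ [false] := (List.prefix_append _ _).isInfix
  have heq : ∀ w, w <:+ S ++ [false] → w.length = v.length → w = v := fun w hw h =>
    (List.suffix_of_suffix_length_le hw hv h.le).eq_of_length h
  rintro w (⟨⟨h0, h1, h2, h3⟩, hT⟩ | ⟨⟨h0, h1, h2, h3⟩, hS⟩)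
  · -- a MAW of `S` that disappears is the shortest suffix absent from `S`
    left; left
    have hw : w <:+: S ++ [false] := by
      by_contra h
      exact hT ⟨h0, h, h2.trans hST, h3.trans hST⟩
    have hsuf := infix_append_false hw h1
    have ht := (hmin _ ((List.tail_suffix w).trans hsuf)).1 h2
    have h1' := mt (hmin _ hsuf).2 h1
    have := List.length_pos_iff.2 h0
    rw [List.length_tail] at ht
    exact heq w hsuf (by omega)
  · have hwS : ¬ w <:+: S := fun h => h1 (h.trans hST)
    unfold Occurs at h1 h2 h3
    by_cases hd : w.dropLast <:+: S
    · right
      have ht : ¬ w.tail <:+: S := fun h => hS ⟨h0, hwS, h, hd⟩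
      have hsuf := infix_append_false h2 ht
      have hp := mt (hmin _ hsuf).2 ht
      obtain ⟨a, y, rfl⟩ := List.exists_cons_of_ne_nil h0
      simp only [List.tail_cons] at ht hsuf hp h2
      obtain rfl | ⟨u, rfl, hu⟩ := List.suffix_concat_iff.1 hsuf
      · exact absurd (List.nil_infix) ht
      have hpre : (a :: u) <:+: S := by
        rwa [← List.cons_append, List.dropLast_concat] at hd
      refine ⟨a, u, rfl, by simpa using hp, hpre, ?_⟩
      -- `u` is a proper suffix of `S`; the character before it is not `a`, as `a u 0` is absent
      obtain ⟨z, rfl⟩ := hu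
      obtain rfl | ⟨z, c, rfl⟩ := List.eq_nil_or_concat z
      · have := hpre.length_le
        simp at this
      · refine ⟨c, ?_, ⟨z, by simp⟩⟩
        rintro rfl
        exact h1 ⟨z, [], by simp⟩
    · -- `w = a u b` with `a u` absent from `S`; as `u b` occurs in `S0`, `u` occurs in `S`,
      -- which forces `a u` to be the shortest absent suffix
      left; right
      have hsuf := infix_append_false h3 hd
      have hp := mt (hmin _ hsuf).2 hd
      obtain rfl | ⟨x, b, rfl⟩ := List.eq_nil_or_concat w
      · exact absurd rfl h0
      rw [List.concat_eq_append] at *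
      rw [List.dropLast_concat] at hsuf hp hd
      cases x with
      | nil => exact absurd List.nil_infix hd
      | cons a u =>
        simp only [List.cons_append, List.tail_cons] at h2
        have hu : u <:+: S := by
          by_cases hub : (u ++ [b]) <:+: S
          · exact (List.prefix_append _ _).isInfix.trans hub
          · obtain ⟨z, hz⟩ := infix_append_false h2 hub
            rw [← List.append_assoc] at hz
            exact ⟨z, [], by simpa using List.append_inj_left' hz rfl⟩
        have hlt := (hmin u ((List.suffix_cons a u).trans hsuf)).1 hu
        have hav := heq (a :: u) hsuf (by simp only [List.length_cons] at *; omega)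
        subst hav
        exact ⟨b, rfl, h2⟩

/-- Words in `leftExt S p` are determined by their length, since the alphabet is binary. -/
lemma leftExt_injOn (S : List Bool) (p : ℕ) : Set.InjOn List.length (leftExt S p) := by
  rintro _ ⟨a, u, rfl, -, -, c, hc, hcu⟩ _ ⟨a', u', rfl, -, -, c', hc', hcu'⟩ h
  have h' : (c :: u).length = (c' :: u').length := by simpa using h
  have := (List.suffix_of_suffix_length_le hcu hcu' h'.le).eq_of_length h'
  obtain ⟨rfl, rfl⟩ := List.cons.inj this
  have : a = a' := by revert hc hc'; cases a <;> cases a' <;> cases c <;> simp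
  rw [this]

lemma leftExt_length {S w : List Bool} {p : ℕ} (hw : w ∈ leftExt S p) :
    w.length ∈ Finset.Icc (p + 1) S.length := by
  obtain ⟨a, u, rfl, hp, hau, c, hc, hcu⟩ := hw
  have h1 : (c :: u).length ≤ S.length := hcu.length_le
  have h2 : (c :: u).length ≠ S.length := fun h => by
    -- otherwise both `a u` and `c u` are equal to `S`
    have e1 := hcu.eq_of_length h
    have e2 := hau.eq_of_length h
    exact hc (List.cons.inj (e1.trans e2.symm)).1
  simp only [List.length_cons, List.length_append, List.length_nil, Finset.mem_Icc] at *
  omega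

lemma leftExt_ncard_le {S : List Bool} {p : ℕ} (s : Finset ℕ)
    (h : ∀ w ∈ leftExt S p, w.length ∈ s) :
    (leftExt S p).Finite ∧ (leftExt S p).ncard ≤ s.card := by
  refine ⟨Set.Finite.of_finite_image (s.finite_toSet.subset ?_) (leftExt_injOn S p), ?_⟩
  · rintro _ ⟨w, hw, rfl⟩
    exact h w hw
  · rw [← Set.ncard_coe_finset]
    exact Set.ncard_le_ncard_of_injOn List.length h (leftExt_injOn S p) s.finite_toSet

lemma rightExt_subset (S v : List Bool) :
    rightExt S v ⊆ ({v ++ [true], v ++ [false]} : Finset (List Bool)) := by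
  rintro _ ⟨b, rfl, -⟩
  cases b <;> simp

lemma rightExt_ncard_le_two (S v : List Bool) : (rightExt S v).ncard ≤ 2 := by
  refine (Set.ncard_le_ncard (rightExt_subset S v) (Finset.finite_toSet _)).trans ?_
  rw [Set.ncard_coe_finset]
  exact Finset.card_le_two

lemma rightExt_ncard_le_one {S v : List Bool} (h : ¬ (v.tail ++ [false]) <:+: S ++ [false]) :
    (rightExt S v).ncard ≤ 1 := by
  rw [← Set.ncard_singleton (v ++ [true])]
  refine Set.ncard_le_ncard ?_
  rintro _ ⟨b, rfl, hb⟩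
  cases b
  · exact absurd hb h
  · rfl

lemma all_true_of_not_infix (R : List Bool) (h : ¬ [true, false] <:+: true :: R) :
    false ∉ R := by
  induction R with
  | nil => simp
  | cons r R ih =>
    cases r
    · exact absurd ⟨[], R, rfl⟩ h
    · have := ih fun h' => h (h'.trans (List.suffix_cons _ _).isInfix)
      simpa using this

/-- If `0` does not occur in `S`, no two different characters do. -/
lemma leftExt_eq_empty {S : List Bool} (h : ¬ [false] <:+: S) : leftExt S 1 = ∅ := by
  have key : ∀ x, [x] <:+: S → x = true := by
    intro x hx
    cases x
    · exact absurd hx h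
    · rfl
  rw [Set.eq_empty_iff_forall_notMem]
  rintro _ ⟨a, u, rfl, -, hau, c, hc, hcu⟩
  have e1 := key a ((List.prefix_append [a] u).isInfix.trans hau)
  have e2 := key c ((List.prefix_append [c] u).isInfix.trans hcu.isInfix)
  exact hc (e2.trans e1.symm)

/-- For `v = 00` the length `3` is not attained in `leftExt`. -/
lemma leftExt_length_ne_three {S w : List Bool} (hv : [false, false] <:+ S ++ [false])
    (h : ¬ [false, false] <:+: S) (hw : w ∈ leftExt S 2) : w.length ≠ 3 := by
  obtain ⟨a, u, rfl, -, hau, c, hc, hcu⟩ := hw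
  intro h3
  obtain ⟨x, rfl⟩ : ∃ x, u = [x] := List.length_eq_one_iff.1 (by simpa using h3)
  have hS : [false] <:+ S := by
    obtain h' | ⟨t, ht, h'⟩ := List.suffix_concat_iff.1 hv
    · simp at h'
    · obtain rfl : t = [false] := (List.append_inj_left' (s₁ := [false]) ht rfl).symm
      exact h'
  have hx : [x] = [false] :=
    (List.suffix_of_suffix_length_le ((List.suffix_cons c [x]).trans hcu) hS le_rfl).eq_of_length rfl
  obtain rfl : x = false := by simpa using hx
  -- one of the two characters `a ≠ c` is `0`
  cases a
  · exact h hau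
  · cases c
    · exact h hcu.isInfix
    · exact hc rfl

/-- If `S` has no factor `10` and contains `00`, then `leftExt` has no word of length `|S|`. -/
lemma leftExt_length_ne {S w : List Bool} {p : ℕ} (h : ¬ [true, false] <:+: S)
    (h00 : [false, false] <:+: S) (hw : w ∈ leftExt S p) : w.length ≠ S.length := by
  obtain ⟨a, u, rfl, -, ⟨s, t, hst⟩, c, hc, ⟨z, hz⟩⟩ := hw
  intro hlen
  have hzl : z.length = 1 := by
    have := congrArg List.length hz
    simp at this hlen
    omega
  obtain ⟨x, rfl⟩ := List.length_eq_one_iff.1 hzl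
  cases s with
  | cons y s =>
    -- then `a u` is the suffix of `S` of its length, which is `c u`
    have e : s ++ (a :: u) ++ t = c :: u := by
      have := hst.trans hz.symm
      simp only [List.cons_append, List.nil_append, List.cons.injEq] at this
      exact this.2
    have hin : (a :: u) <:+: (c :: u) := ⟨s, t, e⟩
    exact hc (List.cons.inj (hin.eq_of_length rfl)).1.symm
  | nil =>
    -- then `S` starts with `a` followed by `c u`
    subst hz
    simp only [List.cons_append, List.nil_append, List.cons.injEq] at hst h h00
    obtain ⟨rfl, -⟩ := hst
    cases a
    · obtain rfl : c = true := by simpa using hc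
      have hu := all_true_of_not_infix u fun h' => h (h'.trans (List.suffix_cons _ _).isInfix)
      obtain h' | h' := List.infix_cons_iff.1 h00
      · simp at h'
      · have := h'.subset (a := false) (by simp)
        simp [hu] at this
    · have hu := all_true_of_not_infix _ h
      have := h00.subset (a := false) (by simp)
      simp_all

theorem binary_maw_symmDiff_le_max (S : List Bool) (d : ℕ) (hlen : S.length = d) (hd : 1 ≤ d) :
    (MAW S ∆ MAW (S ++ [false])).ncard ≤ max 3 d := by
  subst hlen
  obtain ⟨v, hv, hmin⟩ := exists_shortest_absent_suffix S
  have hvS : ¬ v <:+: S := fun h => lt_irrefl _ ((hmin v hv).1 h)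
  have hfin : (rightExt S v).Finite := (Finset.finite_toSet _).subset (rightExt_subset S v)
  have hA := rightExt_ncard_le_two S v
  obtain ⟨hCfin, hC⟩ := leftExt_ncard_le (S := S) (p := v.length) _ fun w hw => leftExt_length hw
  have hsum : (MAW S ∆ MAW (S ++ [false])).ncard ≤
      1 + (rightExt S v).ncard + (leftExt S v.length).ncard := by
    refine (Set.ncard_le_ncard (symmDiff_subset hv hmin)
      (((Set.finite_singleton v).union hfin).union hCfin)).trans ?_
    refine (Set.ncard_union_le _ _).trans (Nat.add_le_add_right ?_ _)
    exact (Set.ncard_union_le _ _).trans (by rw [Set.ncard_singleton])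
  rw [Nat.card_Icc] at hC
  have hpos : 0 < v.length := List.length_pos_iff.2 (by rintro rfl; exact hvS List.nil_infix)
  obtain h1 | h2 | h3 : v.length = 1 ∨ v.length = 2 ∨ 3 ≤ v.length := by omega
  · have hf : ¬ [false] <:+: S := fun h => by
      have := (hmin [false] (List.suffix_append _ _)).1 h
      simp [h1] at this
    rw [h1, leftExt_eq_empty hf, Set.ncard_empty] at hsum
    omega
  · by_cases hd3 : S.length < 3
    · omega
    -- one word has to be saved with respect to the bound `1 + 2 + (d - 2)`
    obtain ⟨e, rfl⟩ : ∃ e, v = [e, false] := by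
      obtain ⟨x, y, rfl⟩ := List.length_eq_two.1 h2
      have : [y] <:+ S ++ [false] := (List.suffix_cons x [y]).trans hv
      have := (List.suffix_of_suffix_length_le this
        (List.suffix_append S [false]) le_rfl).eq_of_length rfl
      exact ⟨x, by simpa using this⟩
    have hlen2 : ([e, false] : List Bool).length = 2 := rfl
    rw [hlen2] at hC hsum
    cases e
    · have := (leftExt_ncard_le ((Finset.Icc (2 + 1) S.length).erase 3) fun w hw =>
        Finset.mem_erase.2 ⟨leftExt_length_ne_three hv hvS hw, leftExt_length hw⟩).2
      rw [Finset.card_erase_of_mem (by simp; omega), Nat.card_Icc] at this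
      omega
    · by_cases h00 : [false, false] <:+: S
      · have := (leftExt_ncard_le ((Finset.Icc (2 + 1) S.length).erase S.length) fun w hw =>
          Finset.mem_erase.2 ⟨leftExt_length_ne hvS h00 hw, leftExt_length hw⟩).2
        rw [Finset.card_erase_of_mem (by simp; omega), Nat.card_Icc] at this
        omega
      · have := rightExt_ncard_le_one (S := S) (v := [true, false]) fun h => by
          have hs := infix_append_false h h00
          have := (List.suffix_of_suffix_length_le hs hv le_rfl).eq_of_length rfl
          simp at this
        omega
  · omega
end
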